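/- arXiv:2501.08151 — 9 statements merged into one kernel-verified Lean document; each statement's English description precedes it below -/
import Mathlib

section
/- If deg(Ē) > 0 for every nonempty subset Ē ⊆ E (in particular for Ē = E), then the Feynman integral ∫_{Λ^V} ∏_{e∈E} |K(x_{s(e)} − x_{t(e)})| dx over the product of copies of the torus indexed by V is finite. -/
open MeasureTheory

instance : Fact ((0 : ℝ) < 1) := ⟨one_pos⟩

instance feyn_prob : IsProbabilityMeasure (volume : Measure (AddCircle (1 : ℝ))) :=
  ⟨by simp [AddCircle.measure_univ]⟩

instance feyn_null : NullSingletonClass (volume : Measure (AddCircle (1 : ℝ))) :=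
  ⟨fun x => by rw [← Metric.closedBall_zero, AddCircle.volume_closedBall]; simp⟩

/-- Adding an edge joining two different colour classes factorizes the integral. -/
lemma feyn_step {d : ℕ} {V : Type} [Fintype V] [DecidableEq V] (c : V → V) (u v : V)
    (huv : c v ≠ c u) (Φ : (V → (Fin d → AddCircle (1 : ℝ))) → ENNReal) (hΦ : Measurable Φ)
    (hinv : ∀ x y, Φ ((fun i => if c i = c u then y else 0) + x) = Φ x)
    (g : (Fin d → AddCircle (1 : ℝ)) → ENNReal) (hg : Measurable g) :
    ∫⁻ x, Φ x * g (x u - x v) = (∫⁻ x, Φ x) * ∫⁻ y, g y := by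
  have h1 : ∀ y : Fin d → AddCircle (1 : ℝ),
      ∫⁻ x, Φ x * g (x u - x v) = ∫⁻ x, Φ x * g ((x u - x v) + y) := by
    intro y
    rw [← lintegral_add_left_eq_self _ (fun i : V => if c i = c u then y else 0)]
    refine lintegral_congr fun x => ?_
    rw [hinv]
    simp only [Pi.add_apply, if_true, if_neg huv]
    congr 2
    abel
  have h2 : ∫⁻ x, Φ x * g (x u - x v)
      = ∫⁻ _y : Fin d → AddCircle (1 : ℝ), ∫⁻ x, Φ x * g (x u - x v) := by
    simp
  rw [h2, lintegral_congr h1, lintegral_lintegral_swap]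
  · have h3 : ∀ x : V → (Fin d → AddCircle (1 : ℝ)),
        ∫⁻ y, Φ x * g ((x u - x v) + y) = Φ x * ∫⁻ y, g y := by
      intro x
      rw [lintegral_const_mul _ (by fun_prop), lintegral_add_left_eq_self]
    rw [lintegral_congr h3, lintegral_mul_const _ hΦ]
  · apply Measurable.aemeasurable
    fun_prop

lemma feyn_int1 (p : ℝ) (hp : p < 1) :
    Integrable (fun y : AddCircle (1 : ℝ) => ‖y‖ ^ (-p)) := by
  have hm : Measurable (fun y : AddCircle (1 : ℝ) => ‖y‖ ^ (-p)) := by fun_prop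
  refine ⟨hm.aestronglyMeasurable, ?_⟩
  unfold HasFiniteIntegral
  rw [← AddCircle.lintegral_preimage 1 (-(1/2))]
  have h := (intervalIntegral.intervalIntegrable_rpow' (a := 0) (b := 1/2) (r := -p) (by linarith))
  have h' : IntervalIntegrable (fun x : ℝ => |x| ^ (-p)) volume 0 (1/2) := by
    refine h.congr ?_
    intro x hx
    rw [Set.uIoc_of_le (by norm_num)] at hx
    simp [abs_of_pos hx.1]
  have h'' : IntervalIntegrable (fun x : ℝ => |x| ^ (-p)) volume (-(1/2)) 0 := by
    have := h'.symm
    rw [IntervalIntegrable.iff_comp_neg] at this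
    simpa using this
  have h3 := h''.trans h'
  rw [intervalIntegrable_iff_integrableOn_Ioc_of_le (by norm_num)] at h3
  have h4 := h3.2
  unfold HasFiniteIntegral at h4
  refine lt_of_eq_of_lt ?_ h4
  have : (-(1/2) + 1 : ℝ) = 1/2 := by norm_num
  rw [this]
  refine setLIntegral_congr_fun measurableSet_Ioc ?_
  intro x hx
  have : ‖(x : AddCircle (1:ℝ))‖ = |x| := by
    rw [AddCircle.norm_coe_eq_abs_iff 1 one_ne_zero, abs_one, abs_le]
    exact ⟨hx.1.le, hx.2⟩
  simp only [this]

lemma feyn_int {d : ℕ} (hd : 1 ≤ d) (b : ℝ) (hb : 0 ≤ b) (hbd : b < d) :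
    ∫⁻ y : Fin d → AddCircle (1 : ℝ), ENNReal.ofReal (‖y‖ ^ (-b)) < ⊤ := by
  have hd0 : (0 : ℝ) < d := by exact_mod_cast hd
  have h1 : Integrable (fun y : Fin d → AddCircle (1 : ℝ) => ∏ i, ‖y i‖ ^ (-(b / d))) :=
    Integrable.fintype_prod (f := fun _ (y : AddCircle (1 : ℝ)) => ‖y‖ ^ (-(b / d))) (fun i =>
      feyn_int1 (b / d) (by rw [div_lt_one hd0]; exact hbd))
  refine lt_of_le_of_lt ?_ h1.2
  apply lintegral_mono_ae
  have h2 : ∀ᵐ y : Fin d → AddCircle (1 : ℝ), ∀ i, y i ≠ 0 := by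
    rw [ae_all_iff]
    intro i
    have : ∀ᵐ z : AddCircle (1 : ℝ), z ≠ 0 := Measure.ae_ne volume 0
    exact (Measure.quasiMeasurePreserving_eval (fun _ : Fin d => (volume : Measure (AddCircle (1 : ℝ)))) i).ae this
  filter_upwards [h2] with y hy
  rw [← ofReal_norm]
  apply ENNReal.ofReal_le_ofReal
  refine le_trans ?_ (le_abs_self _)
  have : ‖y‖ ^ (-b) = ∏ i : Fin d, ‖y‖ ^ (-(b / d)) := by
    rw [Finset.prod_const, Finset.card_univ, Fintype.card_fin, ← Real.rpow_natCast,
      ← Real.rpow_mul (norm_nonneg _)]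
    congr 1
    field_simp
  rw [this]
  apply Finset.prod_le_prod
  · intros; positivity
  · intro i _
    apply Real.rpow_le_rpow_of_nonpos
    · exact norm_pos_iff.mpr (hy i)
    · exact norm_le_pi_norm y i
    · have : 0 ≤ b / d := by positivity
      linarith

/-- Counting lemma: if all edges of `F` are monochromatic for `c`, then
`a |F| ≤ b (|V| - |c(V)|)`. -/
lemma feyn_count {V E : Type} [Fintype V] [DecidableEq V] [DecidableEq E] (s t : E → V) (a b : ℝ)
    (hb : 0 ≤ b)
    (hab : ∀ F : Finset E, F.Nonempty →
      a * (F.card : ℝ) ≤ b * (((F.image s ∪ F.image t).card : ℝ) - 1))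
    (F : Finset E) (c : V → V) (hc : ∀ e ∈ F, c (s e) = c (t e)) :
    a * (F.card : ℝ) ≤ b * ((Fintype.card V : ℝ) - ((Finset.univ.image c).card : ℝ)) := by
  classical
  have h1 : F.card = ∑ k ∈ Finset.univ.image c, (F.filter (fun e => c (s e) = k)).card :=
    Finset.card_eq_sum_card_fiberwise (by intro e _; simp)
  have h2 : Fintype.card V =
      ∑ k ∈ Finset.univ.image c, (Finset.univ.filter (fun v => c v = k)).card :=
    Finset.card_eq_sum_card_fiberwise (s := Finset.univ) (by intro e _; simp)
  rw [h1, h2, Finset.card_eq_sum_ones (Finset.univ.image c)]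
  push_cast
  rw [← Finset.sum_sub_distrib, Finset.mul_sum, Finset.mul_sum]
  apply Finset.sum_le_sum
  intro k hk
  rcases (F.filter (fun e => c (s e) = k)).eq_empty_or_nonempty with h | h
  · rw [h]
    obtain ⟨v, -, hv⟩ := Finset.mem_image.mp hk
    have : 1 ≤ (Finset.univ.filter (fun v => c v = k)).card :=
      Finset.card_pos.mpr ⟨v, by simp [hv]⟩
    have : (1 : ℝ) ≤ (Finset.univ.filter (fun v => c v = k)).card := by exact_mod_cast this
    simp only [Finset.card_empty, Nat.cast_zero, mul_zero]
    exact mul_nonneg hb (by linarith)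
  · refine (hab _ h).trans ?_
    apply mul_le_mul_of_nonneg_left _ hb
    apply sub_le_sub_right
    norm_cast
    apply Finset.card_le_card
    intro v hv
    simp only [Finset.mem_union, Finset.mem_image, Finset.mem_filter] at hv
    rcases hv with ⟨e, ⟨he, hk⟩, rfl⟩ | ⟨e, ⟨he, hk⟩, rfl⟩
    · simp [hk]
    · simp [← hc e he, hk]

/-- The Kruskal greedy algorithm, together with finiteness of the forest integral. -/
lemma feyn_kruskal {d : ℕ} {V E : Type} [Fintype V] [DecidableEq V] [DecidableEq E]
    (s t : E → V) (a b : ℝ) (hb : 0 ≤ b)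
    (hab : ∀ F : Finset E, F.Nonempty →
      a * (F.card : ℝ) ≤ b * (((F.image s ∪ F.image t).card : ℝ) - 1))
    (g : (Fin d → AddCircle (1 : ℝ)) → ENNReal) (hg : Measurable g) (hgi : ∫⁻ y, g y < ⊤)
    (w : E → ℝ) (F : Finset E) :
    ∃ T ⊆ F, ∃ c : V → V, (∀ e ∈ F, c (s e) = c (t e)) ∧
      Fintype.card V ≤ T.card + (Finset.univ.image c).card ∧
      (∫⁻ x : V → (Fin d → AddCircle (1 : ℝ)), ∏ e ∈ T, g (x (s e) - x (t e)) < ⊤) ∧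
      ∀ m : ℝ, (∀ e ∈ F, m ≤ w e) → a * ∑ e ∈ F, (w e - m) ≤ b * ∑ e ∈ T, (w e - m) := by
  induction F using Finset.induction_on_min_value w with
  | empty =>
    refine ⟨∅, subset_rfl, id, by simp, by simp, by simp, by simp⟩
  | insert e0 F he0 hmin ih =>
    obtain ⟨T, hTF, c, hc, hcard, hint, hw⟩ := ih
    -- the common final computation
    have key : ∀ T' : Finset E, ∀ c' : V → V, (∀ e ∈ insert e0 F, c' (s e) = c' (t e)) →
        Fintype.card V ≤ T'.card + (Finset.univ.image c').card →
        (∑ e ∈ T', (w e - w e0) = ∑ e ∈ T, (w e - w e0)) →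
        ∀ m : ℝ, (∀ e ∈ insert e0 F, m ≤ w e) →
          a * ∑ e ∈ insert e0 F, (w e - m) ≤ b * ∑ e ∈ T', (w e - m) := by
      intro T' c' hc' hcard' hsum m hm
      have h1 := feyn_count s t a b hb hab (insert e0 F) c' hc'
      have h2 : (Fintype.card V : ℝ) ≤ T'.card + (Finset.univ.image c').card := by
        exact_mod_cast hcard'
      have h3 : a * ((insert e0 F).card : ℝ) ≤ b * T'.card :=
        h1.trans (mul_le_mul_of_nonneg_left (by linarith) hb)
      have h4 := hw (w e0) hmin
      have h5 : ∀ S : Finset E, ∑ e ∈ S, (w e - m) =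
          ∑ e ∈ S, (w e - w e0) + (S.card : ℝ) * (w e0 - m) := by
        intro S
        rw [← nsmul_eq_mul, ← Finset.sum_const, ← Finset.sum_add_distrib]
        exact Finset.sum_congr rfl fun _ _ => by ring
      rw [h5, h5, hsum, Finset.sum_insert he0, sub_self, zero_add]
      have h6 : 0 ≤ w e0 - m := sub_nonneg.mpr (hm e0 (Finset.mem_insert_self _ _))
      have h7 := mul_le_mul_of_nonneg_right h3 h6
      nlinarith
    by_cases h : c (t e0) = c (s e0)
    · have hc' : ∀ e ∈ insert e0 F, c (s e) = c (t e) := by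
        intro e he
        rcases Finset.mem_insert.mp he with rfl | he
        · exact h.symm
        · exact hc e he
      exact ⟨T, hTF.trans (Finset.subset_insert _ _), c, hc', hcard, hint,
        key T c hc' hcard rfl⟩
    · have heT : e0 ∉ T := fun h' => he0 (hTF h')
      set c' : V → V := fun v => if c v = c (s e0) then c (t e0) else c v with hcdef
      have hc' : ∀ e ∈ insert e0 F, c' (s e) = c' (t e) := by
        intro e he
        rcases Finset.mem_insert.mp he with rfl | he
        · simp [hcdef]
        · simp [hcdef, hc e he]
      have hcard' : Fintype.card V ≤ (insert e0 T).card + (Finset.univ.image c').card := by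
        have h1 : Finset.univ.image c ⊆ insert (c (s e0)) (Finset.univ.image c') := by
          intro k hk
          obtain ⟨v, -, rfl⟩ := Finset.mem_image.mp hk
          by_cases hv : c v = c (s e0)
          · simp [hv]
          · refine Finset.mem_insert_of_mem (Finset.mem_image.mpr ⟨v, Finset.mem_univ _, ?_⟩)
            simp [hcdef, hv]
        have h2 := (Finset.card_le_card h1).trans (Finset.card_insert_le _ _)
        rw [Finset.card_insert_of_notMem heT]
        omega
      refine ⟨insert e0 T, Finset.insert_subset_insert _ hTF, c', hc', hcard', ?_,
        key _ c' hc' hcard' (by rw [Finset.sum_insert heT]; simp)⟩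
      have h1 : ∀ x : V → (Fin d → AddCircle (1 : ℝ)),
          ∏ e ∈ insert e0 T, g (x (s e) - x (t e)) =
            (∏ e ∈ T, g (x (s e) - x (t e))) * g (x (s e0) - x (t e0)) := by
        intro x
        rw [Finset.prod_insert heT, mul_comm]
      rw [lintegral_congr h1, feyn_step c (s e0) (t e0) h _ (by fun_prop) _ g hg]
      · exact ENNReal.mul_lt_top hint hgi
      · intro x y
        refine Finset.prod_congr rfl fun e he => ?_
        simp only [Pi.add_apply, hc e (hTF he), add_sub_add_left_eq_sub]

theorem stmt_0
    (d : ℕ) (hd : 1 ≤ d) (ℓ C : ℝ) (hℓ : ℓ ≤ 0) (hC : 0 < C)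
    (K : (Fin d → AddCircle (1 : ℝ)) → ℝ) (hK : Measurable K)
    (hKbound : ∀ x : Fin d → AddCircle (1 : ℝ), x ≠ 0 → |K x| ≤ C * ‖x‖ ^ ℓ)
    (V E : Type) [Fintype V] [Fintype E] [Nonempty V] [DecidableEq V]
    (s t : E → V) (hst : ∀ e : E, s e ≠ t e)
    (hdeg : ∀ F : Finset E, F.Nonempty →
      0 < ℓ * (F.card : ℝ) + (d : ℝ) * (((F.image s ∪ F.image t).card : ℝ) - 1)) :
    ∫⁻ x : V → (Fin d → AddCircle (1 : ℝ)),
        ∏ e : E, ENNReal.ofReal |K (x (s e) - x (t e))| < ⊤ := by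
  classical
  have hd0 : (0 : ℝ) < d := by exact_mod_cast hd
  have : Nonempty (Fin d) := ⟨⟨0, hd⟩⟩
  -- choice of the exponent
  obtain ⟨b, hb0, hbd, hab⟩ : ∃ b : ℝ, 0 < b ∧ b < d ∧ ∀ F : Finset E, F.Nonempty →
      -ℓ * (F.card : ℝ) ≤ b * (((F.image s ∪ F.image t).card : ℝ) - 1) := by
    have h1 : ∀ᶠ b in nhdsWithin (d : ℝ) (Set.Iio (d : ℝ)), ∀ F : Finset E, F.Nonempty →
        -ℓ * (F.card : ℝ) ≤ b * (((F.image s ∪ F.image t).card : ℝ) - 1) := by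
      rw [Filter.eventually_all]
      intro F
      by_cases hF : F.Nonempty
      · have h2 : -ℓ * (F.card : ℝ) < d * (((F.image s ∪ F.image t).card : ℝ) - 1) := by
          linarith [hdeg F hF]
        have h3 : Filter.Tendsto (fun b : ℝ => b * (((F.image s ∪ F.image t).card : ℝ) - 1))
            (nhds (d : ℝ)) (nhds (d * (((F.image s ∪ F.image t).card : ℝ) - 1))) :=
          (continuous_id.mul continuous_const).tendsto _
        filter_upwards [(h3.eventually_const_lt h2).filter_mono nhdsWithin_le_nhds] with b hb _
        exact hb.le
      · exact Filter.Eventually.of_forall fun b h => absurd h hF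
    have h2 : ∀ᶠ b in nhdsWithin (d : ℝ) (Set.Iio (d : ℝ)), 0 < b :=
      (lt_mem_nhds hd0).filter_mono nhdsWithin_le_nhds
    obtain ⟨b, ⟨h, h'⟩, h''⟩ := ((h1.and h2).and self_mem_nhdsWithin).exists
    exact ⟨b, h', h'', h⟩
  set g : (Fin d → AddCircle (1 : ℝ)) → ENNReal := fun y => ENNReal.ofReal (‖y‖ ^ (-b)) with hgdef
  have hg : Measurable g := by fun_prop
  have hgi : ∫⁻ y, g y < ⊤ := feyn_int hd b hb0.le hbd
  set good : Finset (Finset E) := Finset.univ.filter fun T =>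
    ∫⁻ x : V → (Fin d → AddCircle (1 : ℝ)), ∏ e ∈ T, g (x (s e) - x (t e)) < ⊤ with hgood
  -- almost everywhere, no edge is degenerate
  have hae : ∀ᵐ x : V → (Fin d → AddCircle (1 : ℝ)), ∀ e : E, x (s e) - x (t e) ≠ 0 := by
    rw [ae_all_iff]
    intro e
    have hm : Measurable (({0} : Set (Fin d → AddCircle (1 : ℝ))).indicator (1 : (Fin d → AddCircle (1 : ℝ)) → ENNReal)) :=
      measurable_one.indicator (measurableSet_singleton 0)
    have h1 := feyn_step (d := d) (id : V → V) (s e) (t e) (fun h => hst e h.symm) (fun _ => 1)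
      measurable_const (fun _ _ => rfl) _ hm
    rw [lintegral_indicator_one (measurableSet_singleton 0), measure_singleton, mul_zero,
      lintegral_eq_zero_iff (by fun_prop)] at h1
    filter_upwards [h1] with x hx h0
    simp [h0] at hx
  have hbound : ∀ᵐ x : V → (Fin d → AddCircle (1 : ℝ)),
      ∏ e : E, ENNReal.ofReal |K (x (s e) - x (t e))| ≤
        ENNReal.ofReal (C ^ Fintype.card E) *
          ∑ T ∈ good, ∏ e ∈ T, g (x (s e) - x (t e)) := by
    filter_upwards [hae] with x hx
    set r : E → ℝ := fun e => ‖x (s e) - x (t e)‖ with hr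
    have hrpos : ∀ e, 0 < r e := fun e => norm_pos_iff.mpr (hx e)
    have hr1 : ∀ e, r e ≤ 1 := by
      intro e
      rw [hr]
      refine (pi_norm_le_iff_of_nonneg zero_le_one).mpr fun i => ?_
      refine (AddCircle.norm_le_half_period 1 one_ne_zero).trans ?_
      norm_num
    obtain ⟨T, -, c, -, -, hT, hw⟩ := feyn_kruskal s t (-ℓ) b hb0.le hab g hg hgi
      (fun e => -Real.log (r e)) Finset.univ
    have hw0 := hw 0 (fun e _ => by
      have := Real.log_nonpos (hrpos e).le (hr1 e)
      linarith)
    simp only [sub_zero] at hw0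
    have h1 : ∏ e : E, r e ^ ℓ ≤ ∏ e ∈ T, r e ^ (-b) := by
      simp only [fun e (p : ℝ) => Real.rpow_def_of_pos (hrpos e) p, ← Real.exp_sum]
      apply Real.exp_le_exp.mpr
      rw [← Finset.sum_mul, ← Finset.sum_mul]
      simp only [Finset.sum_neg_distrib] at hw0
      linarith
    calc ∏ e : E, ENNReal.ofReal |K (x (s e) - x (t e))|
        ≤ ∏ e : E, ENNReal.ofReal (C * r e ^ ℓ) :=
          Finset.prod_le_prod' fun e _ => ENNReal.ofReal_le_ofReal (hKbound _ (hx e))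
      _ = ENNReal.ofReal (C ^ Fintype.card E * ∏ e : E, r e ^ ℓ) := by
          rw [← ENNReal.ofReal_prod_of_nonneg
            (fun e _ => mul_nonneg hC.le (Real.rpow_nonneg (hrpos e).le _)),
            Finset.prod_mul_distrib, Finset.prod_const, Finset.card_univ]
      _ ≤ ENNReal.ofReal (C ^ Fintype.card E * ∏ e ∈ T, r e ^ (-b)) :=
          ENNReal.ofReal_le_ofReal (mul_le_mul_of_nonneg_left h1 (by positivity))
      _ = ENNReal.ofReal (C ^ Fintype.card E) * ∏ e ∈ T, g (x (s e) - x (t e)) := by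
          rw [ENNReal.ofReal_mul (by positivity), ENNReal.ofReal_prod_of_nonneg
            (fun e _ => Real.rpow_nonneg (hrpos e).le _)]
      _ ≤ _ := by
          gcongr
          exact Finset.single_le_sum (f := fun T => ∏ e ∈ T, g (x (s e) - x (t e)))
            (fun _ _ => zero_le) (by simp only [hgood, Finset.mem_filter]; exact ⟨Finset.mem_univ _, hT⟩)
  refine (lintegral_mono_ae hbound).trans_lt ?_
  rw [lintegral_const_mul _ (by fun_prop), lintegral_finsetSum _ (fun T _ => by fun_prop)]
  refine ENNReal.mul_lt_top ENNReal.ofReal_lt_top (ENNReal.sum_lt_top.mpr fun T hT => ?_)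
  exact (Finset.mem_filter.mp hT).2
end

section
/- Let X and Y be jointly Gaussian centred real random variables with Var X > 0 and Var Y > 0. Then for all n, m ∈ ℕ, E[H_n(X; Var X) · H_m(Y; Var Y)] = δ_{nm} · n! · (E[X·Y])^n, where δ_{nm} is the Kronecker delta. -/
open MeasureTheory ProbabilityTheory

def AllMom {Ω : Type*} [MeasurableSpace Ω] (P : Measure Ω) (f : Ω → ℝ) : Prop :=
  ∀ k : ℕ, MemLp f k P

lemma AllMom.mul {Ω : Type*} [MeasurableSpace Ω] {P : Measure Ω} {f g : Ω → ℝ}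
    (hf : AllMom P f) (hg : AllMom P g) : AllMom P (fun ω => f ω * g ω) := by
  intro k
  have h : ENNReal.HolderTriple ((2 * k : ℕ) : ENNReal) ((2 * k : ℕ) : ENNReal) (k : ENNReal) := by
    constructor
    push_cast
    rw [ENNReal.mul_inv (by simp) (by simp), ← add_mul, ENNReal.inv_two_add_inv_two, one_mul]
  exact MemLp.mul' (hg (2 * k)) (hf (2 * k))

lemma AllMom.add {Ω : Type*} [MeasurableSpace Ω] {P : Measure Ω} {f g : Ω → ℝ}
    (hf : AllMom P f) (hg : AllMom P g) : AllMom P (fun ω => f ω + g ω) :=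
  fun k => (hf k).add (hg k)

lemma AllMom.const {Ω : Type*} [MeasurableSpace Ω] {P : Measure Ω} [IsFiniteMeasure P] (c : ℝ) :
    AllMom P (fun _ => c) := fun _ => memLp_const c

lemma AllMom.poly {Ω : Type*} [MeasurableSpace Ω] {P : Measure Ω} [IsFiniteMeasure P] {f : Ω → ℝ}
    (hf : AllMom P f) (p : Polynomial ℝ) : AllMom P (fun ω => p.eval (f ω)) := by
  induction p using Polynomial.induction_on with
  | C a => simpa using AllMom.const a
  | add p q hp hq => simpa using hp.add hq
  | monomial n a h =>
    have := h.mul hf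
    simpa [pow_succ, mul_assoc] using this

lemma AllMom.integrable {Ω : Type*} [MeasurableSpace Ω] {P : Measure Ω} {f : Ω → ℝ}
    (hf : AllMom P f) : Integrable f P := memLp_one_iff_integrable.mp (by simpa using hf 1)

lemma integrable_pdf (p : Polynomial ℝ) :
    Integrable (fun x => gaussianPDFReal 0 1 x * p.eval x) := by
  have h : AllMom (gaussianReal 0 1) (fun x : ℝ => x) := fun k =>
    memLp_id_gaussianReal' (k : ENNReal) (by simp)
  have h2 := (h.poly p).integrable
  rw [gaussianReal_of_var_ne_zero _ one_ne_zero,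
    integrable_withDensity_iff_integrable_smul' (measurable_gaussianPDF _ _)
      (by simp [gaussianPDF])] at h2
  simpa [smul_eq_mul] using h2

lemma stein1 (p : Polynomial ℝ) :
    ∫ x, x * p.eval x ∂(gaussianReal 0 1) = ∫ x, p.derivative.eval x ∂(gaussianReal 0 1) := by
  rw [integral_gaussianReal_eq_integral_smul one_ne_zero,
    integral_gaussianReal_eq_integral_smul one_ne_zero]
  simp only [smul_eq_mul]
  have hd : ∀ x, HasDerivAt (fun x => gaussianPDFReal 0 1 x * p.eval x)
      (gaussianPDFReal 0 1 x * (p.derivative - Polynomial.X * p).eval x) x := by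
    intro x
    have h1 : HasDerivAt (gaussianPDFReal 0 1) (gaussianPDFReal 0 1 x * (-x)) x := by
      rw [gaussianPDFReal_def]
      have h3 : HasDerivAt (fun x : ℝ => -(x - 0)^2 / (2 * ((1 : NNReal) : ℝ))) (-x) x := by
        have := ((((hasDerivAt_id x).sub_const 0).pow 2).neg).div_const (2 * ((1 : NNReal) : ℝ))
        refine HasDerivAt.congr_deriv this ?_
        simp
        ring
      refine HasDerivAt.congr_deriv ((h3.exp).const_mul _) ?_
      ring
    refine HasDerivAt.congr_deriv (h1.mul (p.hasDerivAt x)) ?_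
    simp only [Polynomial.eval_sub, Polynomial.eval_mul, Polynomial.eval_X]
    ring
  have h0 := integral_eq_zero_of_hasDerivAt_of_integrable hd (integrable_pdf _) (integrable_pdf _)
  have h4 : ∀ x, gaussianPDFReal 0 1 x * (p.derivative - Polynomial.X * p).eval x =
    gaussianPDFReal 0 1 x * p.derivative.eval x
      - gaussianPDFReal 0 1 x * (Polynomial.X * p).eval x := by
    intro x; simp; ring
  simp_rw [h4] at h0
  rw [integral_sub (integrable_pdf _) (integrable_pdf _)] at h0
  simp only [Polynomial.eval_mul, Polynomial.eval_X] at h0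
  linarith

lemma stein2 {Ω : Type*} [MeasurableSpace Ω] {P : Measure Ω} [IsProbabilityMeasure P]
    {U V : Ω → ℝ} (hUm : Measurable U) (hVm : Measurable V)
    (hG : HasGaussianLaw (fun ω => (U ω, V ω)) P)
    (hU : P.map U = gaussianReal 0 1) (hUa : AllMom P U) (hVa : AllMom P V)
    (p q : Polynomial ℝ) :
    ∫ ω, U ω * (p.eval (U ω) * q.eval (V ω)) ∂P =
      ∫ ω, p.derivative.eval (U ω) * q.eval (V ω) ∂P
      + cov[U, V; P] * ∫ ω, p.eval (U ω) * q.derivative.eval (V ω) ∂P := by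
  set ρ := cov[U, V; P] with hρ
  have hU2 : MemLp U 2 P := by simpa using hUa 2
  have hV2 : MemLp V 2 P := by simpa using hVa 2
  have hvar : Var[U; P] = 1 := by
    have := variance_id_gaussianReal (μ := 0) (v := 1)
    rw [← hU, variance_map (by fun_prop) (by fun_prop)] at this
    simpa using this
  let W : Ω → ℝ := fun ω => V ω - ρ * U ω
  have hWm : Measurable W := by fun_prop
  have hcov : cov[U, W; P] = 0 := by
    have : W = V - fun ω => ρ * U ω := rfl
    rw [this, covariance_sub_right hU2 hV2 (hU2.const_mul ρ), covariance_const_mul_right,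
      covariance_self hUm.aemeasurable, hvar]
    simp [hρ]
  have hG2 : HasGaussianLaw (fun ω => (U ω, W ω)) P :=
    hG.map_fun ((ContinuousLinearMap.fst ℝ ℝ ℝ).prod
      (ContinuousLinearMap.snd ℝ ℝ ℝ - ρ • ContinuousLinearMap.fst ℝ ℝ ℝ))
  have hind := hG2.indepFun_of_covariance_eq_zero hcov
  have hmap := (indepFun_iff_map_prod_eq_prod_map_map hUm.aemeasurable hWm.aemeasurable).1 hind
  rw [hU] at hmap
  have : IsProbabilityMeasure (P.map W) := Measure.isProbabilityMeasure_map hWm.aemeasurable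
  -- transfer
  have key : ∀ r s : Polynomial ℝ, ∫ ω, r.eval (U ω) * s.eval (V ω) ∂P =
      ∫ w, ∫ x, r.eval x * s.eval (ρ * x + w) ∂(gaussianReal 0 1) ∂(P.map W) ∧
      Integrable (fun w => ∫ x, r.eval x * s.eval (ρ * x + w) ∂(gaussianReal 0 1)) (P.map W) := by
    intro r s
    have hc : Continuous (fun z : ℝ × ℝ => r.eval z.1 * s.eval (ρ * z.1 + z.2)) := by fun_prop
    have hi : Integrable (fun z : ℝ × ℝ => r.eval z.1 * s.eval (ρ * z.1 + z.2))
        ((gaussianReal 0 1).prod (P.map W)) := by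
      rw [← hmap, integrable_map_measure hc.aestronglyMeasurable (by fun_prop)]
      simpa [Function.comp_def, W] using ((hUa.poly r).mul (hVa.poly s)).integrable
    refine ⟨?_, hi.integral_prod_right⟩
    rw [← integral_prod_symm _ hi, ← hmap, integral_map (by fun_prop) hc.aestronglyMeasurable]
    simp [W]
  have e1 := key (Polynomial.X * p) q
  have e2 := key p.derivative q
  have e3 := key p q.derivative
  simp only [Polynomial.eval_mul, Polynomial.eval_X, mul_assoc] at e1
  rw [e1.1, e2.1, e3.1, ← integral_const_mul, ← integral_add e2.2 (e3.2.const_mul _)]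
  congr 1
  ext w
  have hs := stein1 (p * q.comp (Polynomial.C ρ * Polynomial.X + Polynomial.C w))
  have h : AllMom (gaussianReal 0 1) (fun x : ℝ => x) := fun k =>
    memLp_id_gaussianReal' (k : ENNReal) (by simp)
  have h' : AllMom (gaussianReal 0 1) (fun x : ℝ => ρ * x + w) :=
    ((AllMom.const ρ).mul h).add (AllMom.const w)
  rw [← integral_const_mul, ← integral_add ((h.poly _).mul (h'.poly _)).integrable
    (((h.poly _).mul (h'.poly _)).integrable.const_mul _)]
  simp only [Polynomial.eval_mul, Polynomial.eval_comp, Polynomial.eval_add, Polynomial.eval_C,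
    Polynomial.eval_X] at hs
  rw [hs]
  congr 1
  ext x
  simp [Polynomial.derivative_comp]
  ring

lemma derivative_hermite (n : ℕ) :
    Polynomial.derivative (Polynomial.hermite (n + 1)) = (n + 1 : ℕ) * Polynomial.hermite n := by
  induction n with
  | zero => simp
  | succ k ih =>
    rw [Polynomial.hermite_succ (k + 1), Polynomial.derivative_sub, Polynomial.derivative_mul, ih,
      Polynomial.derivative_mul, Polynomial.hermite_succ k]
    simp
    ring

noncomputable def He (n : ℕ) : Polynomial ℝ := (Polynomial.hermite n).map (Int.castRingHom ℝ)

lemma He_succ (n : ℕ) : He (n + 1) = Polynomial.X * He n - (He n).derivative := by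
  simp [He, Polynomial.hermite_succ, Polynomial.derivative_map]

lemma derivative_He (n : ℕ) : (He (n + 1)).derivative = Polynomial.C (n + 1 : ℝ) * He n := by
  rw [He, Polynomial.derivative_map, derivative_hermite]
  simp [He]

lemma He_zero : He 0 = 1 := by simp [He]

lemma He_step {Ω : Type*} [MeasurableSpace Ω] {P : Measure Ω} [IsProbabilityMeasure P]
    {U V : Ω → ℝ} (hUm : Measurable U) (hVm : Measurable V)
    (hG : HasGaussianLaw (fun ω => (U ω, V ω)) P)
    (hU : P.map U = gaussianReal 0 1) (hUa : AllMom P U) (hVa : AllMom P V) (n : ℕ)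
    (q : Polynomial ℝ) :
    ∫ ω, (He (n + 1)).eval (U ω) * q.eval (V ω) ∂P =
      cov[U, V; P] * ∫ ω, (He n).eval (U ω) * q.derivative.eval (V ω) ∂P := by
  have h := stein2 hUm hVm hG hU hUa hVa (He n) q
  have e : ∀ ω, (He (n + 1)).eval (U ω) * q.eval (V ω) =
    U ω * ((He n).eval (U ω) * q.eval (V ω)) - (He n).derivative.eval (U ω) * q.eval (V ω) := by
    intro ω; rw [He_succ]; simp; ring
  simp_rw [e]
  rw [integral_sub (hUa.mul ((hUa.poly _).mul (hVa.poly _))).integrable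
    ((hUa.poly _).mul (hVa.poly _)).integrable, h]
  ring

lemma He_main {Ω : Type*} [MeasurableSpace Ω] {P : Measure Ω} [IsProbabilityMeasure P]
    {U V : Ω → ℝ} (hUm : Measurable U) (hVm : Measurable V)
    (hG : HasGaussianLaw (fun ω => (U ω, V ω)) P)
    (hU : P.map U = gaussianReal 0 1) (hV : P.map V = gaussianReal 0 1)
    (hUa : AllMom P U) (hVa : AllMom P V) (n m : ℕ) :
    ∫ ω, (He n).eval (U ω) * (He m).eval (V ω) ∂P =
      (if n = m then (1 : ℝ) else 0) * n.factorial * cov[U, V; P] ^ n := by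
  induction n generalizing m with
  | zero =>
    cases m with
    | zero => simp [He_zero]
    | succ m =>
      have hG' : HasGaussianLaw (fun ω => (V ω, U ω)) P :=
        hG.map_fun ((ContinuousLinearMap.snd ℝ ℝ ℝ).prod (ContinuousLinearMap.fst ℝ ℝ ℝ))
      have := He_step hVm hUm hG' hV hVa hUa m 1
      simpa [He_zero] using this
  | succ n ih =>
    rw [He_step hUm hVm hG hU hUa hVa]
    cases m with
    | zero => simp [He_zero]
    | succ m =>
      rw [derivative_He]
      have e : ∀ ω, (He n).eval (U ω) * (Polynomial.C (m + 1 : ℝ) * He m).eval (V ω) =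
        (m + 1 : ℝ) * ((He n).eval (U ω) * (He m).eval (V ω)) := by intro ω; simp; ring
      simp_rw [e]
      rw [integral_const_mul, ih]
      by_cases h : n = m
      · subst h; simp [Nat.factorial_succ]; ring
      · simp [h]

theorem stmt_1
    {Ω : Type} [MeasureSpace Ω] [IsProbabilityMeasure (volume : Measure Ω)]
    (X Y : Ω → ℝ) (hX : Measurable X) (hY : Measurable Y)
    (hGauss : ∀ u v : ℝ, ∃ σ : NNReal,
      Measure.map (fun ω => u * X ω + v * Y ω) volume = gaussianReal 0 σ)
    (hVX : 0 < variance X volume) (hVY : 0 < variance Y volume)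
    (n m : ℕ) :
    ∫ ω, (Real.sqrt (variance X volume) ^ n *
          Polynomial.aeval (X ω / Real.sqrt (variance X volume)) (Polynomial.hermite n)) *
        (Real.sqrt (variance Y volume) ^ m *
          Polynomial.aeval (Y ω / Real.sqrt (variance Y volume)) (Polynomial.hermite m))
      = (if n = m then (1 : ℝ) else 0) * n.factorial * (∫ ω, X ω * Y ω) ^ n := by
  set a := Real.sqrt (variance X volume) with ha
  set b := Real.sqrt (variance Y volume) with hb
  have ha0 : 0 < a := Real.sqrt_pos.2 hVX
  have hb0 : 0 < b := Real.sqrt_pos.2 hVY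
  have ha2 : a ^ 2 = variance X volume := Real.sq_sqrt hVX.le
  have hb2 : b ^ 2 = variance Y volume := Real.sq_sqrt hVY.le
  have hG : HasGaussianLaw (fun ω => (X ω, Y ω)) (volume : Measure Ω) := by
    constructor
    apply isGaussian_of_map_eq_gaussianReal
    intro L
    obtain ⟨σ, hσ⟩ := hGauss (L (1, 0)) (L (0, 1))
    refine ⟨0, σ, ?_⟩
    rw [Measure.map_map (by fun_prop) (by fun_prop), ← hσ]
    congr 1
    ext ω
    have : ((X ω, Y ω) : ℝ × ℝ) = X ω • ((1, 0) : ℝ × ℝ) + Y ω • ((0, 1) : ℝ × ℝ) := by simp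
    simp only [Function.comp]
    rw [this, map_add, map_smul, map_smul]
    simp [mul_comm]
  have norm_law : ∀ (Z : Ω → ℝ) (c : ℝ), Measurable Z → 0 < c → c ^ 2 = variance Z volume →
      (∃ σ : NNReal, Measure.map Z volume = gaussianReal 0 σ) →
      Measure.map (fun ω => Z ω / c) volume = gaussianReal 0 1 ∧
      AllMom volume (fun ω => Z ω / c) ∧ ∫ ω, Z ω = 0 ∧ AllMom volume Z := by
    rintro Z c hZ hc hc2 ⟨σ, hσ⟩
    have h1 : ((σ : NNReal) : ℝ) = c ^ 2 := by
      have := variance_id_gaussianReal (μ := 0) (v := σ)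
      rw [← hσ, variance_map (by fun_prop) (by fun_prop)] at this
      rw [hc2, ← this]; simp
    have h2 : AllMom volume Z := by
      intro k
      have := memLp_id_gaussianReal' (μ := 0) (v := σ) (k : ENNReal) (by simp)
      rw [← hσ, memLp_map_measure_iff (by fun_prop) (by fun_prop)] at this
      simpa using this
    refine ⟨?_, ?_, ?_, h2⟩
    · have := gaussianReal_map_div_const (μ := 0) (v := σ) c
      rw [← hσ, Measure.map_map (by fun_prop) (by fun_prop)] at this
      refine this.trans ?_
      congr 1
      · simp
      · ext
        have : c ^ 2 ≠ 0 := by positivity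
        rw [NNReal.coe_div, h1]
        simp [this]
    · simpa [div_eq_mul_inv] using h2.mul (AllMom.const c⁻¹)
    · have := integral_id_gaussianReal (μ := 0) (v := σ)
      rw [← hσ, integral_map (by fun_prop) (by fun_prop)] at this
      simpa using this
  obtain ⟨hU, hUa, hX0, hXa⟩ := norm_law X a hX ha0 ha2 (by simpa using hGauss 1 0)
  obtain ⟨hV, hVa, hY0, hYa⟩ := norm_law Y b hY hb0 hb2 (by simpa using hGauss 0 1)
  have hG2 : HasGaussianLaw (fun ω => (X ω / a, Y ω / b)) (volume : Measure Ω) := by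
    have := hG.map_fun ((a⁻¹ • ContinuousLinearMap.fst ℝ ℝ ℝ).prod
      (b⁻¹ • ContinuousLinearMap.snd ℝ ℝ ℝ))
    simpa [div_eq_inv_mul] using this
  have hmain := He_main (hX.div_const a) (hY.div_const b) hG2 hU hV hUa hVa n m
  have hcov : cov[fun ω => X ω / a, fun ω => Y ω / b; volume] = (∫ ω, X ω * Y ω) / (a * b) := by
    simp only [div_eq_mul_inv]
    rw [covariance_mul_const_left, covariance_mul_const_right,
      covariance_eq_sub (by simpa using hXa 2) (by simpa using hYa 2), hX0, hY0]
    simp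
    ring
  rw [hcov] at hmain
  have e : ∀ ω, (a ^ n * Polynomial.aeval (X ω / a) (Polynomial.hermite n)) *
      (b ^ m * Polynomial.aeval (Y ω / b) (Polynomial.hermite m)) =
      (a ^ n * b ^ m) * ((He n).eval (X ω / a) * (He m).eval (Y ω / b)) := by
    intro ω
    simp only [He, Polynomial.eval_map, Polynomial.aeval_def]
    simp only [eq_intCast, algebraMap_int_eq]
    ring
  simp_rw [e]
  rw [integral_const_mul, hmain]
  by_cases h : n = m
  · subst h
    simp only [if_true]
    rw [div_pow, mul_pow]
    field_simp
  · simp [h]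
end

section
/- Let X_1, …, X_N be jointly Gaussian centred random variables with Var X_i > 0 for each i, and let k_1, …, k_N ∈ ℕ. Then E[∏_{i=1}^N H_{k_i}(X_i; Var X_i)] = Σ_P ∏_{{(i,j),(i′,j′)} ∈ P} E[X_i · X_{i′}], where the sum runs over all pairings P of the half-edge set H = {(i,j) : 1 ≤ i ≤ N, 1 ≤ j ≤ k_i} (the sum being 0 if no such pairing exists). -/
open MeasureTheory ProbabilityTheory

namespace WickAux
open scoped ENNReal NNReal

/-- all moments finite -/
def AllLp {Ω : Type*} [MeasurableSpace Ω] (μ : Measure Ω) (f : Ω → ℝ) : Prop :=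
  ∀ p : ℝ≥0∞, p ≠ ⊤ → MemLp f p μ

section
variable {Ω : Type*} [MeasurableSpace Ω] {μ : Measure Ω} [IsProbabilityMeasure μ]

lemma AllLp.mul {f g : Ω → ℝ} (hf : AllLp μ f) (hg : AllLp μ g) :
    AllLp μ (fun ω => f ω * g ω) := by
  intro p hp
  have h2 : (2 * p) ≠ ⊤ := ENNReal.mul_ne_top (by simp) hp
  have : ENNReal.HolderTriple (2 * p) (2 * p) p := by
    constructor
    rw [ENNReal.mul_inv (by simp) (by simp), ← add_mul, ENNReal.inv_two_add_inv_two, one_mul]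
  exact (hg (2 * p) h2).mul (hf (2 * p) h2)

lemma AllLp.add {f g : Ω → ℝ} (hf : AllLp μ f) (hg : AllLp μ g) :
    AllLp μ (fun ω => f ω + g ω) := fun p hp => (hf p hp).add (hg p hp)

lemma AllLp.const (c : ℝ) : AllLp μ (fun _ => c) := fun p _ => memLp_const c

lemma AllLp.integrable {f : Ω → ℝ} (hf : AllLp μ f) : Integrable f μ :=
  memLp_one_iff_integrable.1 (hf 1 (by simp))

lemma AllLp.prod {ι : Type*} (s : Finset ι) {f : ι → Ω → ℝ} (hf : ∀ i, AllLp μ (f i)) :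
    AllLp μ (fun ω => ∏ i ∈ s, f i ω) := by
  classical
  induction s using Finset.induction_on with
  | empty => simpa using AllLp.const 1
  | insert a s ha ih =>
    simp_rw [Finset.prod_insert ha]
    exact (hf a).mul ih

lemma AllLp.sum {ι : Type*} (s : Finset ι) {f : ι → Ω → ℝ} (hf : ∀ i, AllLp μ (f i)) :
    AllLp μ (fun ω => ∑ i ∈ s, f i ω) := by
  classical
  induction s using Finset.induction_on with
  | empty => simpa using AllLp.const 0
  | insert a s ha ih =>
    simp_rw [Finset.sum_insert ha]
    exact (hf a).add ih

lemma AllLp.pow {f : Ω → ℝ} (hf : AllLp μ f) (n : ℕ) :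
    AllLp μ (fun ω => f ω ^ n) := by
  simpa using AllLp.prod (Finset.range n) (fun _ => hf)

lemma AllLp.poly {f : Ω → ℝ} (hf : AllLp μ f) (q : Polynomial ℝ) :
    AllLp μ (fun ω => q.eval (f ω)) := by
  simp_rw [Polynomial.eval_eq_sum_range]
  exact AllLp.sum _ fun i => (AllLp.const _).mul (hf.pow i)
end

/-- one dimensional Stein identity for polynomials -/
lemma stein (v : ℝ≥0) (hv : v ≠ 0) (q : Polynomial ℝ) :
    ∫ x, x * q.eval x ∂(gaussianReal 0 v)
      = v * ∫ x, (Polynomial.derivative q).eval x ∂(gaussianReal 0 v) := by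
  have hid : AllLp (gaussianReal 0 v) (fun x : ℝ => x) := fun p hp => memLp_id_gaussianReal' p hp
  have hint : ∀ r : Polynomial ℝ, Integrable (fun x => r.eval x * gaussianPDFReal 0 v x) := by
    intro r
    have := (hid.poly r).integrable
    rw [gaussianReal_of_var_ne_zero _ hv, integrable_withDensity_iff (measurable_gaussianPDF _ _)
      (ae_of_all _ fun _ ↦ gaussianPDF_lt_top)] at this
    simpa [toReal_gaussianPDF] using this
  have hv0 : (v : ℝ) ≠ 0 := by exact_mod_cast hv
  have hd : ∀ x, HasDerivAt (gaussianPDFReal 0 v) (-(x / v) * gaussianPDFReal 0 v x) x := by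
    intro x
    have h1 : HasDerivAt (fun x : ℝ => -(x - 0) ^ 2 / (2 * v)) (-(x / v)) x := by
      have := ((((hasDerivAt_id' x).sub_const 0).fun_pow 2).fun_neg).div_const (2 * (v:ℝ))
      refine this.congr_deriv ?_
      simp; field_simp
    have h2 := (h1.exp).const_mul ((√(2 * Real.pi * v))⁻¹)
    rw [gaussianPDFReal_def]
    refine h2.congr_deriv ?_
    ring
  have key := integral_mul_deriv_eq_deriv_mul_of_integrable (u := fun x => q.eval x)
    (v := gaussianPDFReal 0 v) (u' := fun x => (Polynomial.derivative q).eval x)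
    (v' := fun x => -(x / v) * gaussianPDFReal 0 v x)
    (fun x _ => q.hasDerivAt x) (fun x _ => hd x)
    (by
      have := hint (Polynomial.C (-(1 / (v:ℝ))) * Polynomial.X * q)
      refine this.congr (ae_of_all _ fun x => ?_)
      simp; ring)
    (hint _) (hint _)
  rw [integral_gaussianReal_eq_integral_smul hv, integral_gaussianReal_eq_integral_smul hv]
  simp only [smul_eq_mul]
  have e1 : ∫ x, gaussianPDFReal 0 v x * (x * q.eval x)
     = -v * ∫ x, q.eval x * (-(x / v) * gaussianPDFReal 0 v x) := by
    rw [← integral_const_mul]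
    congr 1; ext x; field_simp
  rw [e1, key]
  simp [mul_comm]

section
variable {Ω : Type*} [MeasurableSpace Ω] {μ : Measure Ω} [IsProbabilityMeasure μ]

lemma hasLaw {N : ℕ} (X : Fin N → Ω → ℝ) (hX : ∀ i, Measurable (X i))
    (hGauss : ∀ c : Fin N → ℝ, ∃ σ : NNReal,
      Measure.map (fun ω => ∑ i, c i * X i ω) μ = gaussianReal 0 σ) :
    HasGaussianLaw (fun ω => (X · ω)) μ := by
  constructor
  apply isGaussian_of_map_eq_gaussianReal
  intro L
  obtain ⟨σ, h⟩ := hGauss (fun i => L (Pi.single i 1))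
  refine ⟨0, σ, ?_⟩
  rw [← h, Measure.map_map (by fun_prop) (by fun_prop)]
  congr 1
  ext ω
  simp only [Function.comp]
  conv_lhs => rw [← Finset.univ_sum_single (fun i => X i ω), map_sum]
  refine Finset.sum_congr rfl fun i _ => ?_
  have : Pi.single i (X i ω) = (X i ω) • (Pi.single i 1 : Fin N → ℝ) := by
    simp [← Pi.single_smul]
  rw [this, map_smul, smul_eq_mul, mul_comm]

lemma single_law {N : ℕ} (X : Fin N → Ω → ℝ) 
    (hGauss : ∀ c : Fin N → ℝ, ∃ σ : NNReal,
      Measure.map (fun ω => ∑ i, c i * X i ω) μ = gaussianReal 0 σ) (a : Fin N) :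
    ∃ σ : NNReal, Measure.map (X a) μ = gaussianReal 0 σ := by
  obtain ⟨σ, h⟩ := hGauss (Pi.single a 1)
  refine ⟨σ, ?_⟩
  rw [← h]; congr 1; ext ω
  simp [Pi.single_apply]

lemma ibp {N : ℕ} (X : Fin N → Ω → ℝ) (hX : ∀ i, Measurable (X i))
    (hGauss : ∀ c : Fin N → ℝ, ∃ σ : NNReal,
      Measure.map (fun ω => ∑ i, c i * X i ω) μ = gaussianReal 0 σ)
    (a : Fin N) (hV : 0 < variance (X a) μ) (q : Fin N → Polynomial ℝ) :
    ∫ ω, X a ω * ∏ b, (q b).eval (X b ω) ∂μ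
      = ∑ b, (∫ ω, X a ω * X b ω ∂μ) *
          ∫ ω, (Polynomial.derivative (q b)).eval (X b ω)
            * ∏ c ∈ Finset.univ.erase b, (q c).eval (X c ω) ∂μ := by
  have hlaw := hasLaw X hX hGauss
  have hLp : ∀ b, AllLp μ (X b) := fun b p hp => (hlaw.eval b).memLp hp
  have hmean : ∀ b, ∫ ω, X b ω ∂μ = 0 := by
    intro b
    obtain ⟨σ, h⟩ := single_law X hGauss b
    have := integral_id_gaussianReal (μ := 0) (v := σ)
    rwa [← h, integral_map (hX b).aemeasurable (by fun_prop)] at this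
  obtain ⟨v, hv⟩ := single_law X hGauss a
  have hvar : variance (X a) μ = v := by
    have := variance_id_gaussianReal (μ := 0) (v := v)
    rwa [← hv, variance_map (by fun_prop) (hX a).aemeasurable] at this
  have hcov : ∀ b c, cov[X b, X c; μ] = ∫ ω, X b ω * X c ω ∂μ := by
    intro b c
    rw [covariance_eq_sub (hLp b 2 (by simp)) (hLp c 2 (by simp)), hmean, hmean]
    simp
  have hv0 : (v : ℝ) ≠ 0 := by rw [← hvar]; exact hV.ne'
  have hv0' : v ≠ 0 := by exact_mod_cast hv0
  set K : Fin N → ℝ := fun b => (∫ ω, X a ω * X b ω ∂μ) / v with hK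
  set Y : Fin N → Ω → ℝ := fun b ω => X b ω - K b * X a ω with hY
  have hYm : ∀ b, Measurable (Y b) := fun b => by simp only [hY]; fun_prop
  have hYLp : ∀ b, AllLp μ (Y b) := fun b => by
    have := (hLp b).add ((AllLp.const (-K b)).mul (hLp a))
    simpa [hY, sub_eq_add_neg] using this
  have hXY : ∀ b ω, X b ω = K b * X a ω + Y b ω := fun b ω => by simp [hY]
  have hjoint : HasGaussianLaw (fun ω ↦ ((fun _ : Unit ↦ X a ω), fun j ↦ Y j ω)) μ := by
    let L : (Fin N → ℝ) →L[ℝ] ((Unit → ℝ) × (Fin N → ℝ)) :=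
      (ContinuousLinearMap.pi fun _ => ContinuousLinearMap.proj a).prod
        (ContinuousLinearMap.pi fun j => ContinuousLinearMap.proj j
          - K j • ContinuousLinearMap.proj a)
    exact hlaw.map L
  have hind : IndepFun (fun ω (_ : Unit) => X a ω) (fun ω j => Y j ω) μ := by
    refine hjoint.indepFun_of_covariance_eval (X := fun _ : Unit => X a) fun _ j => ?_
    have : Y j = fun ω => X j ω - (K j * X a ω) := rfl
    rw [this, covariance_fun_sub_right (hLp a 2 (by simp)) (hLp j 2 (by simp))
      ((hLp a 2 (by simp)).const_mul _), covariance_const_mul_right, hcov,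
      covariance_self (hX a).aemeasurable, hvar]
    simp [hK, hv0]
  have hind2 : IndepFun (X a) (fun ω j => Y j ω) μ :=
    hind.comp (φ := fun z : Unit → ℝ => z ()) (ψ := id) (by fun_prop) measurable_id
  have hYm' : Measurable (fun ω j => Y j ω) := measurable_pi_lambda _ hYm
  set ν := Measure.map (fun ω j => Y j ω) μ with hν
  have : IsProbabilityMeasure ν := Measure.isProbabilityMeasure_map hYm'.aemeasurable
  have hprod : Measure.map (fun ω => (X a ω, fun j => Y j ω)) μ = (gaussianReal 0 v).prod ν := by
    rw [(indepFun_iff_map_prod_eq_prod_map_map (hX a).aemeasurable hYm'.aemeasurable).1 hind2, hv]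
  have hfub : ∀ F : ℝ × (Fin N → ℝ) → ℝ, Measurable F → 
      Integrable (fun ω => F (X a ω, fun j => Y j ω)) μ → 
      ∫ ω, F (X a ω, fun j => Y j ω) ∂μ = ∫ y, ∫ x, F (x, y) ∂(gaussianReal 0 v) ∂ν := by
    intro F hF hFi
    have hm : AEMeasurable (fun ω => (X a ω, fun j => Y j ω)) μ :=
      ((hX a).prodMk hYm').aemeasurable
    rw [← integral_map (f := F) hm hF.aestronglyMeasurable, hprod]
    apply integral_prod_symm
    rw [← hprod]
    exact (integrable_map_measure hF.aestronglyMeasurable hm).2 hFi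
  have hevm : ∀ q : Polynomial ℝ, Measurable (fun x => q.eval x) :=
    fun q => q.continuous.measurable
  have hlin : ∀ b, Measurable fun z : ℝ × (Fin N → ℝ) => K b * z.1 + z.2 b := by
    intro b; fun_prop
  have hevm2 : ∀ (q : Polynomial ℝ) b, 
      Measurable fun z : ℝ × (Fin N → ℝ) => q.eval (K b * z.1 + z.2 b) :=
    fun q b => (hevm q).comp (hlin b)
  have hterm : ∀ b, AllLp μ fun ω => (Polynomial.derivative (q b)).eval (X b ω)
            * ∏ c ∈ Finset.univ.erase b, (q c).eval (X c ω) := fun b =>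
    ((hLp b).poly _).mul (AllLp.prod _ fun c => (hLp c).poly _)
  have h1 := hfub (fun z => z.1 * ∏ b, (q b).eval (K b * z.1 + z.2 b))
    (measurable_fst.mul (Finset.measurable_prod _ fun b _ => hevm2 _ b))
    (by
      simp only [← hXY]
      exact ((hLp a).mul (AllLp.prod _ fun b => (hLp b).poly _)).integrable)
  have h2 := hfub (fun z => v * ∑ b, K b * ((Polynomial.derivative (q b)).eval (K b * z.1 + z.2 b)
            * ∏ c ∈ Finset.univ.erase b, (q c).eval (K c * z.1 + z.2 c)))
    (measurable_const.mul (Finset.measurable_sum _ fun b _ => measurable_const.mul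
      ((hevm2 _ b).mul (Finset.measurable_prod _ fun c _ => hevm2 _ c))))
    (by
      simp only [← hXY]
      exact ((AllLp.const _).mul (AllLp.sum _ fun b => (AllLp.const _).mul (hterm b))).integrable)
  simp only [← hXY] at h1 h2
  have h3 : ∀ y : Fin N → ℝ, ∫ x, x * ∏ b, (q b).eval (K b * x + y b) ∂(gaussianReal 0 v)
      = ∫ x, v * ∑ b, K b * ((Polynomial.derivative (q b)).eval (K b * x + y b)
            * ∏ c ∈ Finset.univ.erase b, (q c).eval (K c * x + y c)) ∂(gaussianReal 0 v) := by
    intro y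
    have := stein v hv0' (∏ b, (q b).comp (Polynomial.C (K b) * Polynomial.X + Polynomial.C (y b)))
    rw [Polynomial.derivative_prod_finset, ← integral_const_mul] at this
    simp only [Polynomial.eval_prod, Polynomial.eval_finsetSum, Polynomial.eval_comp,
      Polynomial.derivative_comp, Polynomial.eval_mul, Polynomial.eval_add, Polynomial.eval_C,
      Polynomial.eval_X, Polynomial.derivative_add, Polynomial.derivative_mul,
      Polynomial.derivative_C, Polynomial.derivative_X, zero_mul, zero_add, mul_one, add_zero] at this
    rw [this]
    congr 1; ext x; congr 1
    refine Finset.sum_congr rfl fun b _ => ?_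
    ring
  simp only [h3] at h1
  rw [h1, ← h2, integral_const_mul, integral_finsetSum _ fun b _ =>
    ((AllLp.const _).mul (hterm b)).integrable, Finset.mul_sum]
  refine Finset.sum_congr rfl fun b _ => ?_
  rw [integral_const_mul, ← mul_assoc]
  congr 1
  simp only [hK]; field_simp
end

/-- Hermite polynomials with variance `v`. -/
noncomputable def hp (v : ℝ) : ℕ → Polynomial ℝ
  | 0 => 1
  | n + 1 => Polynomial.X * hp v n - Polynomial.C v * Polynomial.derivative (hp v n)

lemma hp_deriv (v : ℝ) (n : ℕ) :
    Polynomial.derivative (hp v n) = (n : Polynomial ℝ) * hp v (n - 1) := by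
  induction n with
  | zero => simp [hp]
  | succ n ih =>
    rw [hp]
    cases n with
    | zero => simp [hp]
    | succ n =>
      simp only [Nat.add_sub_cancel] at ih ⊢
      have e : Polynomial.derivative (Polynomial.derivative (hp v (n + 1))) =
          ((n + 1 : ℕ) : Polynomial ℝ) * Polynomial.derivative (hp v n) := by
        rw [ih, Polynomial.derivative_mul, Polynomial.derivative_natCast]; ring
      rw [Polynomial.derivative_sub, Polynomial.derivative_mul, Polynomial.derivative_mul, e, ih,
        Polynomial.derivative_X, Polynomial.derivative_C]
      rw [show hp v (n + 1) = Polynomial.X * hp v n - Polynomial.C v * Polynomial.derivative (hp v n)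
        from rfl]
      push_cast; ring

lemma hp_eq (s : ℝ) (hs : s ≠ 0) (n : ℕ) :
    hp (s ^ 2) n = Polynomial.C (s ^ n) *
      ((Polynomial.hermite n).map (Int.castRingHom ℝ)).comp
        (Polynomial.C s⁻¹ * Polynomial.X) := by
  induction n with
  | zero => simp [hp]
  | succ n ih =>
    rw [hp, ih, Polynomial.hermite_succ]
    simp only [Polynomial.derivative_mul, Polynomial.derivative_C, Polynomial.derivative_comp,
      Polynomial.derivative_X, Polynomial.map_sub, Polynomial.map_mul, Polynomial.map_X,
      Polynomial.sub_comp, Polynomial.mul_comp, Polynomial.X_comp, Polynomial.derivative_map]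
    have h : (Polynomial.C s : Polynomial ℝ) * Polynomial.C s⁻¹ = 1 := by
      rw [← Polynomial.C_mul, mul_inv_cancel₀ hs, Polynomial.C_1]
    simp only [Polynomial.C_pow, Polynomial.C_mul, pow_succ, pow_zero, Polynomial.C_1]
    linear_combination (Polynomial.C s ^ n * (-Polynomial.X *
      ((Polynomial.hermite n).map (Int.castRingHom ℝ)).comp (Polynomial.C s⁻¹ * Polynomial.X)
      - Polynomial.C s * (((Polynomial.derivative (Polynomial.hermite n)).map
        (Int.castRingHom ℝ)).comp (Polynomial.C s⁻¹ * Polynomial.X)))) * h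

lemma hp_eval (s : ℝ) (hs : s ≠ 0) (n : ℕ) (x : ℝ) :
    s ^ n * Polynomial.aeval (x / s) (Polynomial.hermite n) = (hp (s ^ 2) n).eval x := by
  rw [hp_eq s hs]
  simp [Polynomial.aeval_def, Polynomial.eval_map, Polynomial.eval_comp, div_eq_inv_mul]

section comb
variable {V : Type*} [DecidableEq V] {ι : Type*} [DecidableEq ι]

/-- pairings of a subset `S` of half-edges -/
def IsP (f : V → ι) (S : Finset V) (P : Finset (Sym2 V)) : Prop :=
  (∀ h₁ h₂, s(h₁, h₂) ∈ P → h₁ ∈ S ∧ h₂ ∈ S ∧ f h₁ ≠ f h₂) ∧ (∀ h ∈ S, ∃! p, p ∈ P ∧ h ∈ p)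

open Classical in
/-- weighted sum over pairings -/
noncomputable def W [Fintype V] (f : V → ι) (w : Sym2 V → ℝ) (S : Finset V) : ℝ :=
  ∑ P ∈ Finset.univ.filter (fun P => IsP f S P), ∏ p ∈ P, w p

lemma W_empty [Fintype V] (f : V → ι) (w : Sym2 V → ℝ) : W f w ∅ = 1 := by
  classical
  have : (Finset.univ.filter (fun P => IsP f ∅ P)) = {∅} := by
    ext P
    rw [Finset.mem_filter, Finset.mem_singleton]
    simp only [Finset.mem_univ, true_and, IsP]
    constructor
    · rintro ⟨h, -⟩
      refine Finset.eq_empty_of_forall_notMem fun p => ?_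
      induction p using Sym2.ind with
      | _ x y => intro hp; simpa using (h x y hp).1
    · rintro rfl; simp
  rw [W, this]; simp

lemma W_rec [Fintype V] (f : V → ι) (w : Sym2 V → ℝ) (S : Finset V) (h₀ : V) (h₀S : h₀ ∈ S) :
    W f w S = ∑ h ∈ (S.erase h₀).filter (fun h => f h ≠ f h₀),
      w s(h₀, h) * W f w ((S.erase h₀).erase h) := by
  classical
  simp only [W, Finset.mul_sum]
  rw [Finset.sum_sigma']
  symm
  have hnot : ∀ x : (_ : V) × Finset (Sym2 V),
      IsP f ((S.erase h₀).erase x.1) x.2 → s(h₀, x.1) ∉ x.2 := by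
    rintro ⟨h, Q⟩ hQ hm
    have := (hQ.1 _ _ hm).1
    simp at this
  refine Finset.sum_bij (fun x _ => insert s(h₀, x.1) x.2) ?_ ?_ ?_ ?_
  · rintro ⟨h, Q⟩ hx
    simp only [Finset.mem_sigma, Finset.mem_filter, Finset.mem_univ, true_and,
      Finset.mem_erase] at hx ⊢
    obtain ⟨⟨⟨hne, hS⟩, hf⟩, hQ1, hQ2⟩ := hx
    refine ⟨?_, ?_⟩
    · intro a b hab
      rw [Finset.mem_insert, Sym2.eq_iff] at hab
      rcases hab with (⟨rfl, rfl⟩ | ⟨rfl, rfl⟩) | hab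
      · exact ⟨h₀S, hS, hf.symm⟩
      · exact ⟨hS, h₀S, hf⟩
      · have := hQ1 a b hab
        simp only [Finset.mem_erase] at this
        exact ⟨this.1.2.2, this.2.1.2.2, this.2.2⟩
    · have hin : ∀ p ∈ Q, h₀ ∉ p ∧ h ∉ p := by
        intro p
        induction p using Sym2.ind with
        | _ x y =>
          intro hp
          have := hQ1 x y hp
          simp only [Finset.mem_erase] at this
          simp only [Sym2.mem_iff]
          refine ⟨?_, ?_⟩ <;> rintro (rfl | rfl) <;> tauto
      intro g hg
      by_cases hg0 : g = h₀ ∨ g = h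
      · refine ⟨s(h₀, h), ⟨by simp, by simpa using hg0⟩, ?_⟩
        rintro p ⟨hp, hgp⟩
        rcases Finset.mem_insert.1 hp with rfl | hpQ
        · rfl
        · exfalso
          rcases hg0 with rfl | rfl
          · exact (hin p hpQ).1 hgp
          · exact (hin p hpQ).2 hgp
      · push Not at hg0
        obtain ⟨p, ⟨hp1, hp2⟩, hu⟩ := hQ2 g (by simp [hg0, hg])
        refine ⟨p, ⟨by simp [hp1], hp2⟩, ?_⟩
        rintro p' ⟨hp', hgp'⟩
        rcases Finset.mem_insert.1 hp' with rfl | hp'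
        · simp [hg0] at hgp'
        · exact hu _ ⟨hp', hgp'⟩
  · rintro ⟨h, Q⟩ hx ⟨h', Q'⟩ hx' heq
    simp only [Finset.mem_sigma, Finset.mem_filter, Finset.mem_univ, true_and,
      Finset.mem_erase] at hx hx'
    have hn := hnot ⟨h, Q⟩ hx.2
    have hn' := hnot ⟨h', Q'⟩ hx'.2
    simp only at heq hn hn'
    have hh : h = h' := by
      have : s(h₀, h) ∈ insert s(h₀, h') Q' := by rw [← heq]; simp
      rcases Finset.mem_insert.1 this with e | e
      · rcases Sym2.eq_iff.1 e with e | e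
        · exact e.2
        · exact e.2.trans e.1
      · have := (hx'.2.1 _ _ e).1
        simp at this
    subst hh
    have : Q = Q' := by
      rw [← Finset.erase_insert hn, heq, Finset.erase_insert hn']
    rw [this]
  · intro P hP
    simp only [Finset.mem_filter, Finset.mem_univ, true_and] at hP
    obtain ⟨hP1, hP2⟩ := hP
    obtain ⟨p, ⟨hp, h0p⟩, hu⟩ := hP2 h₀ h₀S
    obtain ⟨h, rfl⟩ := Sym2.mem_iff_exists.1 h0p
    have hh := hP1 _ _ hp
    have hne : h ≠ h₀ := by rintro rfl; exact hh.2.2 rfl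
    obtain ⟨p', -, hu'⟩ := hP2 h hh.2.1
    have hp' := hu' s(h₀, h) ⟨hp, by simp⟩
    refine ⟨⟨h, P.erase s(h₀, h)⟩, ?_, ?_⟩
    · simp only [Finset.mem_sigma, Finset.mem_filter, Finset.mem_univ, true_and,
        Finset.mem_erase]
      refine ⟨⟨⟨hne, hh.2.1⟩, hh.2.2.symm⟩, ?_, ?_⟩
      · intro a b hab
        obtain ⟨hab1, hab2⟩ := Finset.mem_erase.1 hab
        have := hP1 a b hab2
        have k1 : ∀ g ∈ s(a, b), g ≠ h₀ := by
          rintro g hg rfl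
          exact hab1 (hu _ ⟨hab2, hg⟩)
        have k2 : ∀ g ∈ s(a, b), g ≠ h := by
          rintro g hg rfl
          exact hab1 ((hu' _ ⟨hab2, hg⟩).trans hp'.symm)
        simp only [Finset.mem_erase]
        exact ⟨⟨k2 a (by simp), k1 a (by simp), this.1⟩, ⟨k2 b (by simp), k1 b (by simp), this.2.1⟩,
          this.2.2⟩
      · intro g hg
        simp only [Finset.mem_erase] at hg
        obtain ⟨r, ⟨hr, hgr⟩, hur⟩ := hP2 g hg.2.2
        refine ⟨r, ⟨Finset.mem_erase.2 ⟨?_, hr⟩, hgr⟩, ?_⟩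
        · rintro rfl
          rw [Sym2.mem_iff] at hgr
          tauto
        · rintro r' ⟨hr', hgr'⟩
          exact hur _ ⟨(Finset.mem_erase.1 hr').2, hgr'⟩
    · exact Finset.insert_erase hp
  · rintro ⟨h, Q⟩ hx
    simp only [Finset.mem_sigma, Finset.mem_filter, Finset.mem_univ, true_and] at hx
    rw [Finset.prod_insert (hnot ⟨h, Q⟩ hx.2)]

end comb

section main
variable {Ω : Type*} [MeasurableSpace Ω] {μ : Measure Ω} [IsProbabilityMeasure μ]

lemma second_moment {N : ℕ} (X : Fin N → Ω → ℝ) (hX : ∀ i, Measurable (X i))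
    (hGauss : ∀ c : Fin N → ℝ, ∃ σ : NNReal,
      Measure.map (fun ω => ∑ i, c i * X i ω) μ = gaussianReal 0 σ) (a : Fin N) :
    variance (X a) μ = ∫ ω, X a ω * X a ω ∂μ := by
  obtain ⟨σ, h⟩ := single_law X hGauss a
  have := integral_id_gaussianReal (μ := 0) (v := σ)
  rw [← h, integral_map (hX a).aemeasurable (by fun_prop)] at this
  rw [variance_of_integral_eq_zero (hX a).aemeasurable this]
  simp [pow_two]

lemma wick {N : ℕ} (X : Fin N → Ω → ℝ) (hX : ∀ i, Measurable (X i))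
    (hGauss : ∀ c : Fin N → ℝ, ∃ σ : NNReal,
      Measure.map (fun ω => ∑ i, c i * X i ω) μ = gaussianReal 0 σ)
    (hV : ∀ i, 0 < variance (X i) μ) {V : Type*} [DecidableEq V] [Fintype V] (f : V → Fin N)
    (w : Sym2 V → ℝ) (hw : ∀ h h', w s(h, h') = ∫ ω, X (f h) ω * X (f h') ω ∂μ)
    (S : Finset V) :
    ∫ ω, ∏ i, (hp (variance (X i) μ) (S.filter (fun h => f h = i)).card).eval (X i ω) ∂μ
      = W f w S := by
  have hlaw := hasLaw X hX hGauss
  have hLp : ∀ b, AllLp μ (X b) := fun b p hp => (hlaw.eval b).memLp hp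
  induction S using Finset.strongInduction with
  | H S ih =>
  rcases S.eq_empty_or_nonempty with rfl | ⟨h₀, h₀S⟩
  · simp [W_empty, hp]
  rw [W_rec f w S h₀ h₀S]
  set a := f h₀ with ha
  set T := S.erase h₀ with hT
  set v : Fin N → ℝ := fun i => variance (X i) μ with hv
  set m : Fin N → ℕ := fun i => (T.filter (fun h => f h = i)).card with hm
  have hSins : S = insert h₀ T := (Finset.insert_erase h₀S).symm
  have hka : (S.filter (fun h => f h = a)).card = m a + 1 := by
    rw [hSins, Finset.filter_insert, if_pos rfl, Finset.card_insert_of_notMem]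
    simp [hT]
  have hkb : ∀ b, b ≠ a → (S.filter (fun h => f h = b)).card = m b := by
    intro b hb
    rw [hSins, Finset.filter_insert, if_neg (fun h => hb h.symm)]
  set D : Fin N → ℝ := fun b => ∫ ω, (Polynomial.derivative (hp (v b) (m b))).eval (X b ω)
            * ∏ c ∈ Finset.univ.erase b, (hp (v c) (m c)).eval (X c ω) ∂μ with hD
  set I : Fin N → ℝ := fun b => ∫ ω, (hp (v b) (m b - 1)).eval (X b ω)
            * ∏ c ∈ Finset.univ.erase b, (hp (v c) (m c)).eval (X c ω) ∂μ with hI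
  have hDI : ∀ b, D b = m b * I b := by
    intro b
    simp only [hD, hI]
    rw [← integral_const_mul]
    congr 1; ext ω
    rw [hp_deriv]
    simp [mul_assoc]
  have hmain : ∫ ω, ∏ i, (hp (v i) (S.filter (fun h => f h = i)).card).eval (X i ω) ∂μ
      = ∑ b ∈ Finset.univ.erase a, (∫ ω, X a ω * X b ω ∂μ) * D b := by
    have h1 : ∀ ω, ∏ i, (hp (v i) (S.filter (fun h => f h = i)).card).eval (X i ω)
        = X a ω * ∏ b, (hp (v b) (m b)).eval (X b ω)
          - v a * ((Polynomial.derivative (hp (v a) (m a))).eval (X a ω)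
            * ∏ c ∈ Finset.univ.erase a, (hp (v c) (m c)).eval (X c ω)) := by
      intro ω
      rw [← Finset.mul_prod_erase _ _ (Finset.mem_univ a),
        ← Finset.mul_prod_erase _ (fun b => (hp (v b) (m b)).eval (X b ω)) (Finset.mem_univ a),
        hka, hp]
      rw [Finset.prod_congr rfl fun b hb => by rw [hkb b (Finset.ne_of_mem_erase hb)]]
      simp only [Polynomial.eval_sub, Polynomial.eval_mul, Polynomial.eval_X, Polynomial.eval_C]
      ring
    simp_rw [h1]
    rw [integral_sub, ibp X hX hGauss a (hV a), integral_const_mul,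
      ← Finset.add_sum_erase _ _ (Finset.mem_univ a), hv]
    · simp only [second_moment X hX hGauss a]
      ring
    · exact ((hLp a).mul (AllLp.prod _ fun c => (hLp c).poly _)).integrable
    · exact ((AllLp.const _).mul (((hLp a).poly _).mul
        (AllLp.prod _ fun c => (hLp c).poly _))).integrable
  rw [hmain]
  have hmaps : ∀ h ∈ T.filter (fun h => f h ≠ a), f h ∈ Finset.univ.erase a := by
    intro h hh
    simpa using (Finset.mem_filter.1 hh).2
  rw [← Finset.sum_fiberwise_of_maps_to hmaps]
  refine Finset.sum_congr rfl fun b hb => ?_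
  have hba := Finset.ne_of_mem_erase hb
  have hterm : ∀ h ∈ (T.filter (fun h => f h ≠ a)).filter (fun h => f h = b),
      w s(h₀, h) * W f w (T.erase h) = (∫ ω, X a ω * X b ω ∂μ) * I b := by
    intro h hh
    obtain ⟨hh1, rfl⟩ := Finset.mem_filter.1 hh
    have hhT := (Finset.mem_filter.1 hh1).1
    rw [hw, ← ih (T.erase h) ((Finset.erase_subset _ _).trans_ssubset (Finset.erase_ssubset h₀S))]
    congr 1
    simp only [hI]
    congr 1; ext ω
    rw [← Finset.mul_prod_erase _ _ (Finset.mem_univ (f h))]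
    have e1 : ((T.erase h).filter (fun g => f g = f h)).card = m (f h) - 1 := by
      rw [Finset.filter_erase, Finset.card_erase_of_mem]
      simp [hhT]
    have e2 : ∀ c, c ≠ f h → ((T.erase h).filter (fun g => f g = c)).card = m c := by
      intro c hc
      rw [Finset.filter_erase, Finset.erase_eq_of_notMem]
      simp only [Finset.mem_filter, not_and]
      exact fun _ h => hc h.symm
    rw [e1, Finset.prod_congr rfl fun c hc => by rw [e2 c (Finset.ne_of_mem_erase hc)]]
  rw [Finset.sum_congr rfl hterm, Finset.sum_const, hDI, nsmul_eq_mul]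
  have : (T.filter (fun h => f h ≠ a)).filter (fun h => f h = b) = T.filter (fun h => f h = b) := by
    ext h
    simp only [Finset.mem_filter]
    constructor
    · tauto
    · rintro ⟨h1, rfl⟩; exact ⟨⟨h1, hba⟩, rfl⟩
  rw [this]
  simp only [hm]
  ring
end main
end WickAux

open Classical in
theorem stmt_2
    {Ω : Type} [MeasureSpace Ω] [IsProbabilityMeasure (volume : Measure Ω)]
    (N : ℕ) (X : Fin N → Ω → ℝ) (hX : ∀ i, Measurable (X i))
    (hGauss : ∀ c : Fin N → ℝ, ∃ σ : NNReal,
      Measure.map (fun ω => ∑ i, c i * X i ω) volume = gaussianReal 0 σ)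
    (hV : ∀ i, 0 < variance (X i) volume)
    (k : Fin N → ℕ) :
    ∫ ω, ∏ i, (Real.sqrt (variance (X i) volume) ^ (k i) *
          Polynomial.aeval (X i ω / Real.sqrt (variance (X i) volume))
            (Polynomial.hermite (k i)))
      = ∑ P ∈ Finset.univ.filter
            (fun P : Finset (Sym2 (Σ i : Fin N, Fin (k i))) =>
              (∀ p ∈ P, ¬ p.IsDiag) ∧
              (∀ h : Σ i : Fin N, Fin (k i), ∃! p, p ∈ P ∧ h ∈ p) ∧
              (∀ p ∈ P, ∀ h₁ h₂ : Σ i : Fin N, Fin (k i),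
                h₁ ∈ p → h₂ ∈ p → h₁ ≠ h₂ → h₁.1 ≠ h₂.1)),
          ∏ p ∈ P,
            Sym2.lift ⟨fun h₁ h₂ => ∫ ω, X h₁.1 ω * X h₂.1 ω,
              fun h₁ h₂ => by simp_rw [mul_comm]⟩ p := by
  classical
  have hs : ∀ i, Real.sqrt (variance (X i) volume) ≠ 0 := fun i => (Real.sqrt_pos.2 (hV i)).ne'
  simp_rw [WickAux.hp_eval _ (hs _), Real.sq_sqrt (hV _).le]
  have key := WickAux.wick (μ := volume) X hX hGauss hV
    (V := Σ i : Fin N, Fin (k i)) (fun h => h.1)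
    (Sym2.lift ⟨fun h₁ h₂ => ∫ ω, X h₁.1 ω * X h₂.1 ω,
              fun h₁ h₂ => by simp_rw [mul_comm]⟩) (fun _ _ => rfl) Finset.univ
  have hcard : ∀ i : Fin N, ((Finset.univ : Finset (Σ i : Fin N, Fin (k i))).filter
      (fun h => h.1 = i)).card = k i := by
    intro i
    have : (Finset.univ : Finset (Σ i : Fin N, Fin (k i))).filter (fun h => h.1 = i)
        = Finset.univ.map (Function.Embedding.sigmaMk i) := by
      ext ⟨j, x⟩
      simp only [Finset.mem_filter, Finset.mem_univ, true_and, Finset.mem_map,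
        Function.Embedding.sigmaMk_apply]
      constructor
      · rintro rfl; exact ⟨x, rfl⟩
      · rintro ⟨y, hy⟩; exact (congrArg Sigma.fst hy).symm
    rw [this, Finset.card_map, Finset.card_univ, Fintype.card_fin]
  simp_rw [hcard] at key
  rw [key, WickAux.W]
  refine Finset.sum_congr ?_ fun _ _ => rfl
  ext P
  rw [Finset.mem_filter, Finset.mem_filter]
  refine and_congr_right fun _ => ?_
  constructor
  · rintro ⟨h1, h2⟩
    refine ⟨?_, fun h => h2 h (Finset.mem_univ _), ?_⟩
    · intro p
      induction p using Sym2.ind with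
      | _ x y =>
        intro hp hd
        rw [Sym2.mk_isDiag_iff] at hd
        exact (h1 x y hp).2.2 (congrArg Sigma.fst hd)
    · intro p hp a b ha hb hab
      have := (Sym2.mem_and_mem_iff hab).1 ⟨ha, hb⟩
      subst this
      exact (h1 a b hp).2.2
  · rintro ⟨h1, h2, h3⟩
    refine ⟨fun a b hab => ⟨Finset.mem_univ _, Finset.mem_univ _, ?_⟩, fun h _ => h2 h⟩
    refine h3 _ hab a b (by simp) (by simp) fun e => h1 _ hab ?_
    rw [Sym2.mk_isDiag_iff]; exact e
end

section
/- The order of the isomorphism group G is |G| = ∏_{k ∈ ℕ} β(k)! · (k!)^{β(k)}, which is the symmetry factor S_M(z^β) of the multi-index β recording the number β(k) of vertices carrying exactly k half-edges. -/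
theorem aux_card {A I : Type} [Fintype A] [DecidableEq A] [Fintype I] [DecidableEq I] (f : A → I) :
    Nat.card {g : Equiv.Perm A // f ∘ ⇑g = f} =
      ∏ i, Nat.factorial (Finset.univ.filter (fun a => f a = i)).card := by
  rw [Nat.card_eq_fintype_card, DomMulAct.stabilizer_card f]
  refine Finset.prod_congr rfl fun i _ => ?_
  rw [Fintype.card_subtype]

theorem aux_fiber {H V : Type} [Fintype H] [Fintype V] [DecidableEq H] [DecidableEq V]
    (π : H → V) (g : Equiv.Perm V) (d : V → ℕ)
    (hd : d = fun v => (Finset.univ.filter (fun h : H => π h = v)).card) :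
    Nat.card {k : Equiv.Perm H // π ∘ ⇑k = ⇑g ∘ π} =
      if d ∘ ⇑g = d then ∏ v, Nat.factorial (d v) else 0 := by
  have key : ∀ k : Equiv.Perm H, π ∘ ⇑k = ⇑g ∘ π → d ∘ ⇑g = d := by
    intro k hk
    funext v
    simp only [hd, Function.comp]
    symm
    refine Finset.card_bij (fun h _ => k h) ?_ ?_ ?_
    · intro h hh
      have := congrFun hk h
      simp_all
    · intro a _ b _ hab
      exact k.injective hab
    · intro b hb
      refine ⟨k.symm b, ?_, by simp⟩
      have := congrFun hk (k.symm b)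
      simp_all
  split_ifs with h
  · have e : ∀ v, Nonempty ({x // (⇑g ∘ π) x = v} ≃ {x // π x = v}) := by
      intro v
      refine ⟨Fintype.equivOfCardEq ?_⟩
      rw [Fintype.card_subtype, Fintype.card_subtype]
      have := congrFun h (g.symm v)
      simp only [hd, Function.comp, Equiv.apply_symm_apply] at this
      rw [this]
      simp only [Function.comp, Equiv.eq_symm_apply]
    let k0 : Equiv.Perm H := Equiv.ofFiberEquiv fun v => (e v).some
    have hk0 : ∀ x, π (k0 x) = g (π x) := fun x => Equiv.ofFiberEquiv_map _ x
    rw [hd, ← aux_card π]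
    refine Nat.card_congr ((Equiv.mulRight k0⁻¹).subtypeEquiv ?_)
    intro k
    constructor
    · intro hk
      funext x
      have h1 := congrFun hk (k0.symm x)
      have h2 := hk0 (k0.symm x)
      simp at h1 h2
      simp [h1, h2]
    · intro hk
      funext x
      have h1 := congrFun hk (k0 x)
      simpa [hk0] using h1
  · have : IsEmpty {k : Equiv.Perm H // π ∘ ⇑k = ⇑g ∘ π} := ⟨fun k => h (key k.1 k.2)⟩
    simp

/-- For a pre-Feynman diagram given by an attaching map `π : H → V` of
half-edges to vertices, the isomorphism group
`G = {(g_V, g_H) ∈ Perm V × Perm H : π ∘ g_H = g_V ∘ π}` has order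
`∏_k β(k)! · (k!)^{β(k)}`, the symmetry factor `S_M(z^β)` of the multi-index `β`
with `β(k)` the number of vertices carrying exactly `k` half-edges. -/
theorem stmt_3 (H V : Type) [Fintype H] [Fintype V] [DecidableEq H] [DecidableEq V]
    (π : H → V) :
    Nat.card {g : Equiv.Perm V × Equiv.Perm H // π ∘ ⇑g.2 = ⇑g.1 ∘ π} =
      ∏ k ∈ Finset.range (Fintype.card H + 1),
        Nat.factorial
            (Finset.univ.filter
              (fun v : V => (Finset.univ.filter (fun h : H => π h = v)).card = k)).card *
          Nat.factorial k ^
            (Finset.univ.filter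
              (fun v : V => (Finset.univ.filter (fun h : H => π h = v)).card = k)).card := by
  set d : V → ℕ := fun v => (Finset.univ.filter (fun h : H => π h = v)).card with hd
  have hlt : ∀ v, d v < Fintype.card H + 1 := fun v => Nat.lt_succ_of_le (Finset.card_le_univ _)
  let p : V → Fin (Fintype.card H + 1) := fun v => ⟨d v, hlt v⟩
  have e : {g : Equiv.Perm V × Equiv.Perm H // π ∘ ⇑g.2 = ⇑g.1 ∘ π} ≃
      Σ g : Equiv.Perm V, {k : Equiv.Perm H // π ∘ ⇑k = ⇑g ∘ π} :=
    ⟨fun x => ⟨x.1.1, x.1.2, x.2⟩, fun x => ⟨(x.1, x.2.1), x.2.2⟩, fun _ => rfl, fun _ => rfl⟩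
  rw [Nat.card_congr e, Nat.card_sigma]
  simp_rw [aux_fiber π _ d hd]
  rw [← Finset.sum_filter, Finset.sum_const, smul_eq_mul, Finset.prod_mul_distrib]
  congr 1
  · rw [← Fintype.card_subtype, ← Nat.card_eq_fintype_card, Finset.prod_range]
    have h2 := aux_card p
    have h3 : ∀ g : Equiv.Perm V, d ∘ ⇑g = d ↔ p ∘ ⇑g = p := by
      intro g
      simp [funext_iff, p]
    rw [Nat.card_congr (Equiv.subtypeEquivRight h3), h2]
    refine Finset.prod_congr rfl fun i _ => ?_
    simp [p, Fin.ext_iff, d]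
  · rw [← Finset.prod_fiberwise_of_maps_to (s := Finset.univ) (g := d)
      (t := Finset.range (Fintype.card H + 1)) (fun v _ => Finset.mem_range.2 (hlt v))]
    refine Finset.prod_congr rfl fun k _ => ?_
    rw [Finset.prod_congr rfl (g := fun _ => Nat.factorial k), Finset.prod_const]
    intro v hv
    rw [(Finset.mem_filter.1 hv).2]
end

section
/- For every pairing σ of (H, π), one has |Orb(σ)| · |Stab(σ)| = ∏_{k ∈ ℕ} β(k)! · (k!)^{β(k)}; in the paper's notation, the symmetry factor S_M(Φ(Γ)) of the multi-index of the Feynman diagram Γ encoded by σ equals N(Γ)·S_F(Γ), where N(Γ) = |Orb(σ)| is the number of pairings producing a diagram isomorphic to Γ and S_F(Γ) = |Stab(σ)| is the order of its automorphism group. -/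
/-- The isomorphism group of the half-edge structure. -/
def isoGroup {H V : Type} (π : H → V) : Subgroup (Equiv.Perm V × Equiv.Perm H) where
  carrier := {g | π ∘ ⇑g.2 = ⇑g.1 ∘ π}
  one_mem' := rfl
  mul_mem' := by
    intro a b ha hb
    funext h
    have h1 := congrFun ha (b.2 h)
    have h2 := congrFun hb h
    simp only [Function.comp_apply] at h1 h2
    simp [h1, h2]
  inv_mem' := by
    intro a ha
    funext h
    have h1 : π (a.2 (a.2.symm h)) = a.1 (π (a.2.symm h)) := congrFun ha (a.2.symm h)
    rw [Equiv.apply_symm_apply] at h1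
    simp [h1]

theorem isoGroup_orbit_stab {H V : Type} (π : H → V) (σ : Equiv.Perm H) :
    Nat.card {τ : Equiv.Perm H // ∃ g : Equiv.Perm V × Equiv.Perm H,
        (π ∘ ⇑g.2 = ⇑g.1 ∘ π) ∧ g.2 * σ * g.2⁻¹ = τ} *
      Nat.card {g : Equiv.Perm V × Equiv.Perm H //
        (π ∘ ⇑g.2 = ⇑g.1 ∘ π) ∧ g.2 * σ * g.2⁻¹ = σ} =
    Nat.card {g : Equiv.Perm V × Equiv.Perm H // π ∘ ⇑g.2 = ⇑g.1 ∘ π} := by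
  let f : isoGroup π →* MulAut (Equiv.Perm H) :=
    MulAut.conj.comp ((MonoidHom.snd _ _).comp (isoGroup π).subtype)
  letI : MulAction (isoGroup π) (Equiv.Perm H) := MulAction.compHom _ f
  have hs : ∀ (g : isoGroup π) (τ : Equiv.Perm H), g • τ = g.1.2 * τ * g.1.2⁻¹ :=
    fun _ _ => rfl
  have key := Nat.card_congr (MulAction.orbitProdStabilizerEquivGroup (isoGroup π) σ)
  rw [Nat.card_prod] at key
  refine Eq.trans ?_ key
  congr 1
  · refine Nat.card_congr (Equiv.subtypeEquivRight fun τ => ?_)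
    constructor
    · rintro ⟨g, hg, h⟩
      exact ⟨⟨g, hg⟩, h⟩
    · rintro ⟨g, h⟩
      exact ⟨g.1, g.2, h⟩
  · exact Nat.card_congr
      { toFun := fun g => ⟨⟨g.1, g.2.1⟩, g.2.2⟩
        invFun := fun g => ⟨g.1.1, g.1.2, g.2⟩
        left_inv := fun _ => rfl
        right_inv := fun _ => rfl }

theorem exists_lift {H V : Type} [Fintype H] [DecidableEq V] (π : H → V) (g : Equiv.Perm V)
    (hg : ∀ v, Fintype.card {h // π h = g v} = Fintype.card {h // π h = v}) :
    ∃ e : Equiv.Perm H, π ∘ ⇑e = ⇑g ∘ π := by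
  have F : ∀ v, {h // π h = v} ≃ {h // π h = g v} := fun v => Fintype.equivOfCardEq (hg v).symm
  refine ⟨(Equiv.sigmaFiberEquiv π).symm.trans
    ((Equiv.sigmaCongr g F).trans (Equiv.sigmaFiberEquiv π)), ?_⟩
  funext h
  exact (F (π h) ⟨h, rfl⟩).2

theorem card_fiber_of_lift {H V : Type} [Fintype H] [DecidableEq V] (π : H → V)
    (g : Equiv.Perm V) (e : Equiv.Perm H) (he : π ∘ ⇑e = ⇑g ∘ π) (v : V) :
    Fintype.card {h // π h = g v} = Fintype.card {h // π h = v} := by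
  refine (Fintype.card_congr (e.subtypeEquiv fun h => ?_)).symm
  have := congrFun he h
  simp only [Function.comp_apply] at this
  rw [this, g.apply_eq_iff_eq]

theorem card_isoGroup {H V : Type} [Fintype H] [Fintype V] [DecidableEq H] [DecidableEq V]
    (π : H → V) (d : V → Fin (Fintype.card H + 1))
    (hd : ∀ v, (d v : ℕ) = Fintype.card {h // π h = v}) :
    Nat.card {g : Equiv.Perm V × Equiv.Perm H // π ∘ ⇑g.2 = ⇑g.1 ∘ π} =
    Nat.card {g : Equiv.Perm V // d ∘ g = d} * Nat.card {e : Equiv.Perm H // π ∘ e = π} := by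
  have hex : ∀ g : {g : Equiv.Perm V // d ∘ g = d},
      ∃ e : Equiv.Perm H, π ∘ ⇑e = ⇑g.1 ∘ π := by
    intro g
    apply exists_lift
    intro v
    rw [← hd, ← hd]
    exact congrArg Fin.val (congrFun g.2 v)
  choose s hsec using hex
  have hs : ∀ g h, π (s g h) = g.1 (π h) := fun g h => congrFun (hsec g) h
  rw [← Nat.card_prod]
  refine (Nat.card_congr (Equiv.ofBijective
    (fun p : {g : Equiv.Perm V // d ∘ g = d} × {e : Equiv.Perm H // π ∘ e = π} =>
      (⟨(p.1.1, s p.1 * p.2.1), ?_⟩ :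
        {g : Equiv.Perm V × Equiv.Perm H // π ∘ ⇑g.2 = ⇑g.1 ∘ π})) ⟨?_, ?_⟩)).symm
  · funext h
    have := congrFun p.2.2 h
    simp only [Function.comp_apply] at this
    simp [hs, this]
  · rintro ⟨g, e⟩ ⟨g', e'⟩ h
    simp only [Subtype.mk.injEq, Prod.mk.injEq] at h
    obtain ⟨h1, h2⟩ := h
    obtain rfl : g = g' := Subtype.ext h1
    obtain rfl : e = e' := Subtype.ext (mul_left_cancel h2)
    rfl
  · rintro ⟨⟨g, e⟩, h⟩
    have hg : d ∘ g = d := by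
      funext v
      apply Fin.ext
      simp only [Function.comp_apply, hd]
      exact card_fiber_of_lift π g e h v
    refine ⟨⟨⟨g, hg⟩, ⟨(s ⟨g, hg⟩)⁻¹ * e, ?_⟩⟩, ?_⟩
    · funext x
      have h1 := hs ⟨g, hg⟩ ((s ⟨g, hg⟩).symm (e x))
      rw [Equiv.apply_symm_apply] at h1
      have h2 := congrFun h x
      simp only [Function.comp_apply] at h2
      rw [h2] at h1
      exact (g.injective h1).symm
    · simp

/-- Orbit–stabiliser identity for pairings.  Let `π : H → V` attach
half-edges to vertices and let `σ` be a pairing: a fixed-point-free involution of `H`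
with `π (σ h) ≠ π h` for all `h` (no self-connected vertices), encoding a Feynman
diagram `Γ`.  The isomorphism group `G = {(g_V, g_H) : π ∘ g_H = g_V ∘ π}` acts on
pairings by `(g_V, g_H) · σ = g_H ∘ σ ∘ g_H⁻¹`, and
`|Orb(σ)| · |Stab(σ)| = ∏_k β(k)! · (k!)^{β(k)}`; i.e. `S_M(Φ(Γ)) = N(Γ) · S_F(Γ)`. -/
theorem stmt_4 (H V : Type) [Fintype H] [Fintype V] [DecidableEq H] [DecidableEq V]
    (π : H → V) (σ : Equiv.Perm H)
    (hfpf : ∀ h, σ h ≠ h) (hinv : σ * σ = 1) (hself : ∀ h, π (σ h) ≠ π h) :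
    Nat.card {τ : Equiv.Perm H // ∃ g : Equiv.Perm V × Equiv.Perm H,
        (π ∘ ⇑g.2 = ⇑g.1 ∘ π) ∧ g.2 * σ * g.2⁻¹ = τ} *
      Nat.card {g : Equiv.Perm V × Equiv.Perm H //
        (π ∘ ⇑g.2 = ⇑g.1 ∘ π) ∧ g.2 * σ * g.2⁻¹ = σ} =
      ∏ k ∈ Finset.range (Fintype.card H + 1),
        Nat.factorial
            (Finset.univ.filter
              (fun v : V => (Finset.univ.filter (fun h : H => π h = v)).card = k)).card *
          Nat.factorial k ^
            (Finset.univ.filter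
              (fun v : V => (Finset.univ.filter (fun h : H => π h = v)).card = k)).card := by
  have hlt : ∀ v, Fintype.card {h // π h = v} < Fintype.card H + 1 := fun v =>
    Nat.lt_succ_of_le (Fintype.card_subtype_le _)
  let d : V → Fin (Fintype.card H + 1) := fun v => ⟨Fintype.card {h // π h = v}, hlt v⟩
  rw [isoGroup_orbit_stab, card_isoGroup π d fun _ => rfl, Nat.card_eq_fintype_card,
    Nat.card_eq_fintype_card, DomMulAct.stabilizer_card, DomMulAct.stabilizer_card,
    Finset.prod_mul_distrib, ← Fin.prod_univ_eq_prod_range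
      (fun k => Nat.factorial (Finset.univ.filter
        (fun v : V => (Finset.univ.filter (fun h : H => π h = v)).card = k)).card),
    ← Fin.prod_univ_eq_prod_range (fun k => Nat.factorial k ^ (Finset.univ.filter
        (fun v : V => (Finset.univ.filter (fun h : H => π h = v)).card = k)).card)]
  have hdk : ∀ (k : Fin (Fintype.card H + 1)) (v : V),
      d v = k ↔ (Finset.univ.filter (fun h : H => π h = v)).card = (k : ℕ) := by
    intro k v
    rw [Fin.ext_iff, ← Fintype.card_subtype]
  congr 1
  · refine Finset.prod_congr rfl fun k _ => ?_
    rw [Fintype.card_subtype]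
    simp only [hdk]
  · rw [← Finset.prod_fiberwise (s := Finset.univ) (g := d)]
    refine Finset.prod_congr rfl fun k _ => ?_
    rw [Finset.prod_congr rfl (g := fun _ => Nat.factorial k), Finset.prod_const]
    · simp only [hdk]
    · intro v hv
      rw [Finset.mem_filter] at hv
      rw [← hv.2]
end

section
/- The insertion product ▶ on R is left pre-Lie: for all P, Q, W ∈ R, (P ▶ Q) ▶ W − P ▶ (Q ▶ W) = (Q ▶ P) ▶ W − Q ▶ (P ▶ W). -/
/-- The derivation `D = Σ_k z_{k+1} ∂_{z_k}` on `R = ℚ[z_0, z_1, …]`, determined by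
`D z_k = z_{k+1}`. -/
noncomputable def Dz : Derivation ℚ (MvPolynomial ℕ ℚ) (MvPolynomial ℕ ℚ) :=
  MvPolynomial.mkDerivation ℚ (fun k => MvPolynomial.X (k + 1))

/-- The insertion product `P ▶ Q = Σ_k (D^k P) · (∂_{z_k} Q)` on `R = ℚ[z_0, z_1, …]`. -/
noncomputable def ins (P Q : MvPolynomial ℕ ℚ) : MvPolynomial ℕ ℚ :=
  ∑ᶠ k : ℕ, (⇑Dz)^[k] P * MvPolynomial.pderiv k Q

lemma der_sum_apply (s : Finset ℕ)
    (f : ℕ → Derivation ℚ (MvPolynomial ℕ ℚ) (MvPolynomial ℕ ℚ)) (Q : MvPolynomial ℕ ℚ) :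
    (∑ k ∈ s, f k) Q = ∑ k ∈ s, f k Q := by
  classical
  induction s using Finset.induction_on with
  | empty => simp
  | insert a s ha ih => rw [Finset.sum_insert ha, Finset.sum_insert ha, Derivation.add_apply, ih]

/-- Insertion of `P` as a derivation. -/
noncomputable def insD (P : MvPolynomial ℕ ℚ) :
    Derivation ℚ (MvPolynomial ℕ ℚ) (MvPolynomial ℕ ℚ) :=
  MvPolynomial.mkDerivation ℚ (fun k => (⇑Dz)^[k] P)

lemma insD_X (P : MvPolynomial ℕ ℚ) (k : ℕ) : insD P (MvPolynomial.X k) = (⇑Dz)^[k] P :=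
  MvPolynomial.mkDerivation_X _ _ _

lemma Dz_X (k : ℕ) : Dz (MvPolynomial.X k) = MvPolynomial.X (k + 1) :=
  MvPolynomial.mkDerivation_X _ _ _

lemma ins_eq (P Q : MvPolynomial ℕ ℚ) : ins P Q = insD P Q := by
  classical
  have h1 : ins P Q = ∑ k ∈ Q.vars, (⇑Dz)^[k] P * MvPolynomial.pderiv k Q := by
    unfold ins
    apply finsum_eq_sum_of_support_subset
    intro k hk
    by_contra hn
    apply hk
    have : MvPolynomial.pderiv k Q = 0 :=
      MvPolynomial.pderiv_eq_zero_of_notMem_vars (by simpa using hn)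
    simp [this]
  have h2 : insD P Q = (∑ k ∈ Q.vars, (⇑Dz)^[k] P • MvPolynomial.pderiv (R := ℚ) k) Q := by
    apply MvPolynomial.derivation_eq_of_forall_mem_vars
    intro i hi
    rw [insD_X, der_sum_apply, Finset.sum_eq_single i]
    · simp
    · intro j _ hj
      simp [MvPolynomial.pderiv_X_of_ne hj.symm]
    · exact fun h => absurd hi h
  rw [h1, h2, der_sum_apply]
  simp

lemma insD_comm_Dz (P Q : MvPolynomial ℕ ℚ) : insD P (Dz Q) = Dz (insD P Q) := by
  have h : ⁅insD P, Dz⁆ = 0 := by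
    apply MvPolynomial.derivation_ext
    intro k
    rw [Derivation.commutator_apply, Dz_X, insD_X, insD_X, Function.iterate_succ_apply']
    simp
  have := congrArg (fun d => d Q) h
  simpa [Derivation.commutator_apply, sub_eq_zero] using this

lemma insD_iterate (P Q : MvPolynomial ℕ ℚ) (k : ℕ) :
    insD P ((⇑Dz)^[k] Q) = (⇑Dz)^[k] (insD P Q) := by
  induction k with
  | zero => rfl
  | succ n ih => rw [Function.iterate_succ_apply', Function.iterate_succ_apply', insD_comm_Dz, ih]

/-- the insertion product `▶` is left pre-Lie:
`(P ▶ Q) ▶ W − P ▶ (Q ▶ W) = (Q ▶ P) ▶ W − Q ▶ (P ▶ W)`. -/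
theorem stmt_5 (P Q W : MvPolynomial ℕ ℚ) :
    ins (ins P Q) W - ins P (ins Q W) = ins (ins Q P) W - ins Q (ins P W) := by
  simp only [ins_eq]
  have h : ⁅insD P, insD Q⁆ = insD (insD P Q) - insD (insD Q P) := by
    apply MvPolynomial.derivation_ext
    intro k
    rw [Derivation.commutator_apply, Derivation.sub_apply]
    simp only [insD_X, insD_iterate]
  have := congrArg (fun d => d W) h
  simp only [Derivation.commutator_apply, Derivation.sub_apply] at this
  linear_combination -this
end

section
/- (Explicit formula for the reduced extraction–contraction coproduct of multi-indices.) For all nonzero multi-indices β_1, …, β_n (n ≥ 1), every nonzero multi-index α and every multi-index β, the coefficient of the monomial z^β in the simultaneous insertion ∏_{i=1}^n z^{β_i} ⋆ z^α equals Σ_{k_1,…,k_n ∈ ℕ} Σ_{β = β̂_1 + ⋯ + β̂_n + α̂} ( ⟨(∏_{i=1}^n ∂_{z_{k_i}}) z^α, z^{α̂}⟩ / S(α̂) ) · ∏_{i=1}^n ( ⟨D^{k_i} z^{β_i}, z^{β̂_i}⟩ / S(β̂_i) ), where the inner sum runs over all ordered decompositions of β into multi-indices β̂_1, …, β̂_n,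 α̂; equivalently, the coefficient E(∏_i z^{β_i}, z^α, z^β) of the reduced extraction–contraction coproduct, defined so that S_forest(β_1,…,β_n) · S(α) · E = S(β) · coeff_{z^β}(∏_{i=1}^n z^{β_i} ⋆ z^α), is given by the stated explicit formula. -/
/-- The symmetry factor `S(β) = ∏_k β(k)! · (k!)^{β(k)}` of a multi-index `β`. -/
def S (β : ℕ →₀ ℕ) : ℕ :=
  ∏ k ∈ β.support, Nat.factorial (β k) * Nat.factorial k ^ β k

/-- Iterated partial derivatives `(∏_i ∂_{z_{k_i}}) P`. -/
noncomputable def pders (ks : List ℕ) (P : MvPolynomial ℕ ℚ) : MvPolynomial ℕ ℚ :=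
  ks.foldr (fun j Q => MvPolynomial.pderiv j Q) P

theorem S_cast_ne_zero (δ : ℕ →₀ ℕ) : (S δ : ℚ) ≠ 0 := by
  unfold S
  exact_mod_cast Finset.prod_ne_zero_iff.mpr fun k _ =>
    mul_ne_zero (Nat.factorial_ne_zero _) (pow_ne_zero _ (Nat.factorial_ne_zero _))

theorem pders_monomial (α : ℕ →₀ ℕ) (l : List ℕ) :
    ∃ (δ : ℕ →₀ ℕ) (c : ℚ), δ ≤ α ∧ pders l (MvPolynomial.monomial α (1 : ℚ)) =
      MvPolynomial.monomial δ c ∧ (c ≠ 0 → ∀ j ∈ l, j ∈ α.support) := by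
  induction l with
  | nil => exact ⟨α, 1, le_rfl, rfl, by simp⟩
  | cons j l ih =>
    obtain ⟨δ, c, hle, he, hc⟩ := ih
    refine ⟨δ - Finsupp.single j 1, c * δ j, tsub_le_self.trans hle, ?_, ?_⟩
    · have : pders (j :: l) (MvPolynomial.monomial α (1 : ℚ)) =
          MvPolynomial.pderiv j (pders l (MvPolynomial.monomial α (1 : ℚ))) := rfl
      rw [this, he, MvPolynomial.pderiv_monomial]
    · intro h i hi
      rcases List.mem_cons.mp hi with rfl | hi
      · have h1 : δ i ≠ 0 := by
          intro h0
          simp [h0] at h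
        have h2 := hle i
        rw [Finsupp.mem_support_iff]
        omega
      · exact hc (left_ne_zero_of_mul h) i hi

theorem prod_monomial_fin {n : ℕ} (s : Finset (Fin n)) (d : Fin n → (ℕ →₀ ℕ)) (c : Fin n → ℚ) :
    ∏ i ∈ s, MvPolynomial.monomial (d i) (c i) =
      MvPolynomial.monomial (∑ i ∈ s, d i) (∏ i ∈ s, c i) := by
  classical
  induction s using Finset.induction_on with
  | empty => simp
  | insert a s ha ih =>
    rw [Finset.prod_insert ha, Finset.prod_insert ha, Finset.sum_insert ha, ih,
      MvPolynomial.monomial_mul]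

theorem coeff_prod_mul {n : ℕ} (F : Fin n → MvPolynomial ℕ ℚ) (g : MvPolynomial ℕ ℚ)
    (γ : ℕ →₀ ℕ) :
    MvPolynomial.coeff γ ((∏ i, F i) * g) =
      ∑ᶠ p : (Fin n → (ℕ →₀ ℕ)) × (ℕ →₀ ℕ),
        if (∑ i, p.1 i) + p.2 = γ then
          MvPolynomial.coeff p.2 g * ∏ i, MvPolynomial.coeff (p.1 i) (F i) else 0 := by
  classical
  have hprod : (∏ i, F i) = ∑ p ∈ Fintype.piFinset (fun i => (F i).support),
      MvPolynomial.monomial (∑ i, p i) (∏ i, MvPolynomial.coeff (p i) (F i)) := by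
    calc (∏ i, F i) = ∏ i, ∑ d ∈ (F i).support,
          MvPolynomial.monomial d (MvPolynomial.coeff d (F i)) :=
          Finset.prod_congr rfl fun i _ => MvPolynomial.as_sum (F i)
      _ = _ := by
          rw [Finset.prod_univ_sum]
          exact Finset.sum_congr rfl fun p _ => prod_monomial_fin _ _ _
  have hg : (∏ i, F i) * g = ∑ p ∈ Fintype.piFinset (fun i => (F i).support) ×ˢ g.support,
      MvPolynomial.monomial ((∑ i, p.1 i) + p.2)
        (MvPolynomial.coeff p.2 g * ∏ i, MvPolynomial.coeff (p.1 i) (F i)) := by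
    conv_lhs => rw [hprod, MvPolynomial.as_sum g]
    rw [Finset.sum_mul_sum, Finset.sum_product]
    refine Finset.sum_congr rfl fun p _ => Finset.sum_congr rfl fun q _ => ?_
    rw [MvPolynomial.monomial_mul, mul_comm]
  rw [finsum_eq_sum_of_support_subset (s :=
    Fintype.piFinset (fun i => (F i).support) ×ˢ g.support)]
  · rw [hg, MvPolynomial.coeff_sum]
    exact Finset.sum_congr rfl fun p _ => MvPolynomial.coeff_monomial _ _ _
  · intro p hp
    rw [Function.mem_support] at hp
    have h1 : MvPolynomial.coeff p.2 g * ∏ i, MvPolynomial.coeff (p.1 i) (F i) ≠ 0 := by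
      intro h0
      simp [h0] at hp
    rw [Finset.mem_coe, Finset.mem_product, Fintype.mem_piFinset]
    refine ⟨fun i => ?_, ?_⟩
    · exact MvPolynomial.mem_support_iff.mpr
        (Finset.prod_ne_zero_iff.mp (right_ne_zero_of_mul h1) i (Finset.mem_univ i))
    · exact MvPolynomial.mem_support_iff.mpr (left_ne_zero_of_mul h1)

/-- explicit formula for the reduced extraction–contraction coproduct of
multi-indices.  For nonzero multi-indices `β 1, …, β n` (`n ≥ 1`), a nonzero
multi-index `α`, and any multi-index `γ`, the coefficient of `z^γ` in the simultaneous
insertion `∏_i z^{β i} ⋆ z^α = Σ_{k_1,…,k_n} (∏_i D^{k_i} z^{β i}) · ((∏_i ∂_{z_{k_i}}) z^α)`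
equals
`Σ_{k_1,…,k_n} Σ_{γ = β̂_1 + ⋯ + β̂_n + α̂} (⟨(∏_i ∂_{z_{k_i}}) z^α, z^{α̂}⟩/S(α̂)) ·
∏_i (⟨D^{k_i} z^{β i}, z^{β̂_i}⟩/S(β̂_i))`, where `⟨P, z^δ⟩ = S(δ) · coeff_{z^δ} P` and
the inner sum runs over all ordered decompositions of `γ`. -/
theorem stmt_6 (n : ℕ) (hn : 1 ≤ n) (β : Fin n → (ℕ →₀ ℕ)) (hβ : ∀ i, β i ≠ 0)
    (α : ℕ →₀ ℕ) (hα : α ≠ 0) (γ : ℕ →₀ ℕ) :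
    MvPolynomial.coeff γ
      (∑ᶠ k : Fin n → ℕ,
        (∏ i, (⇑Dz)^[k i] (MvPolynomial.monomial (β i) (1 : ℚ))) *
          pders (List.ofFn k) (MvPolynomial.monomial α (1 : ℚ)))
    = ∑ᶠ k : Fin n → ℕ, ∑ᶠ p : (Fin n → (ℕ →₀ ℕ)) × (ℕ →₀ ℕ),
        if (∑ i, p.1 i) + p.2 = γ then
          ((S p.2 : ℚ) *
                MvPolynomial.coeff p.2 (pders (List.ofFn k) (MvPolynomial.monomial α (1 : ℚ))) /
              (S p.2 : ℚ)) *
            ∏ i, ((S (p.1 i) : ℚ) *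
                MvPolynomial.coeff (p.1 i) ((⇑Dz)^[k i] (MvPolynomial.monomial (β i) (1 : ℚ))) /
              (S (p.1 i) : ℚ))
        else 0 := by
  classical
  have hfin : (Function.support fun k : Fin n → ℕ =>
      (∏ i, (⇑Dz)^[k i] (MvPolynomial.monomial (β i) (1 : ℚ))) *
          pders (List.ofFn k) (MvPolynomial.monomial α (1 : ℚ))).Finite := by
    refine (Fintype.piFinset (fun _ : Fin n => α.support)).finite_toSet.subset ?_
    intro k hk
    rw [Function.mem_support] at hk
    obtain ⟨δ, c, -, he, hc⟩ := pders_monomial α (List.ofFn k)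
    have h1 := right_ne_zero_of_mul hk
    rw [he] at h1
    have h2 : c ≠ 0 := by
      rintro rfl
      simp at h1
    rw [Finset.mem_coe, Fintype.mem_piFinset]
    exact fun i => hc h2 _ ((List.mem_ofFn' _ _).mpr ⟨i, rfl⟩)
  have hmap := AddMonoidHom.map_finsum (MvPolynomial.coeffAddMonoidHom (R := ℚ) γ) hfin
  simp only [MvPolynomial.coeffAddMonoidHom_apply] at hmap
  rw [hmap]
  refine finsum_congr fun k => ?_
  rw [coeff_prod_mul]
  refine finsum_congr fun p => ?_
  simp only [mul_div_cancel_left₀ _ (S_cast_ne_zero _)]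
end

section
/- For all integers m ≥ 1 and n ≥ 2m, π_{2,4}( Σ_{k_1,…,k_m ∈ ℕ} (∏_{i=1}^m D^{k_i}(z_3²)) · ((∏_{i=1}^m ∂_{z_{k_i}})(z_2^m · z_4^{n−2m})) ) = 2^m · m! · z_4^n; that is, the rule-restricted simultaneous insertion of m copies of z_3² into z_2^m z_4^{n−2m} for the Φ⁴ rule {2,4} equals 2^m m! z_4^n. -/
/-- The projection `π_{2,4}` keeping exactly the monomials `z^γ` with `γ` supported in
`{2, 4}` (the rule of the `Φ⁴` model). -/
noncomputable def proj24 (P : MvPolynomial ℕ ℚ) : MvPolynomial ℕ ℚ :=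
  ∑ γ ∈ P.support,
    if γ.support ⊆ ({2, 4} : Finset ℕ) then MvPolynomial.monomial γ (MvPolynomial.coeff γ P)
    else 0

/-- The algebra homomorphism killing all variables except `z_2`, `z_4`. -/
noncomputable def phi24 : MvPolynomial ℕ ℚ →ₐ[ℚ] MvPolynomial ℕ ℚ :=
  MvPolynomial.aeval (fun i => if i = 2 ∨ i = 4 then MvPolynomial.X i else 0)

lemma phi24_monomial (γ : ℕ →₀ ℕ) (c : ℚ) :
    phi24 (MvPolynomial.monomial γ c) =
      if γ.support ⊆ ({2, 4} : Finset ℕ) then MvPolynomial.monomial γ c else 0 := by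
  unfold phi24
  rw [MvPolynomial.aeval_monomial]
  split_ifs with h
  · rw [MvPolynomial.monomial_eq, MvPolynomial.algebraMap_eq]
    congr 1
    apply Finset.prod_congr rfl
    intro i hi
    have := h hi
    simp only [Finset.mem_insert, Finset.mem_singleton] at this
    simp [this]
  · rw [Finset.not_subset] at h
    obtain ⟨i, hi, hi2⟩ := h
    simp only [Finset.mem_insert, Finset.mem_singleton] at hi2
    have : (γ.prod fun i k => ((if i = 2 ∨ i = 4 then MvPolynomial.X i else 0 :
        MvPolynomial ℕ ℚ)) ^ k) = 0 := by
      apply Finset.prod_eq_zero hi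
      simp only [if_neg hi2]
      exact zero_pow (Finsupp.mem_support_iff.mp hi)
    rw [this, mul_zero]

lemma proj24_eq (P : MvPolynomial ℕ ℚ) : proj24 P = phi24 P := by
  conv_rhs => rw [P.as_sum]
  rw [map_sum]
  unfold proj24
  exact Finset.sum_congr rfl fun γ _ => (phi24_monomial γ _).symm

lemma pders_form (ks : List ℕ) (a b : ℕ) : ∃ (c : ℚ) (a' b' : ℕ),
    pders ks (MvPolynomial.X 2 ^ a * MvPolynomial.X 4 ^ b) =
      MvPolynomial.C c * (MvPolynomial.X 2 ^ a' * MvPolynomial.X 4 ^ b') ∧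
    ((∃ k ∈ ks, k ≠ 2 ∧ k ≠ 4) → c = 0) := by
  induction ks with
  | nil => exact ⟨1, a, b, by simp [pders], by simp⟩
  | cons k ks ih =>
    obtain ⟨c, a', b', h, h0⟩ := ih
    have e : pders (k :: ks) (MvPolynomial.X 2 ^ a * MvPolynomial.X 4 ^ b) =
        MvPolynomial.pderiv k (MvPolynomial.C c *
          (MvPolynomial.X 2 ^ a' * MvPolynomial.X 4 ^ b')) := by
      rw [← h]; rfl
    rw [e]
    by_cases k2 : k = 2
    · subst k2
      refine ⟨c * a', a' - 1, b', ?_, ?_⟩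
      · simp [MvPolynomial.pderiv_mul, MvPolynomial.pderiv_pow, MvPolynomial.pderiv_X]
        ring
      · intro hh
        simp at hh
        rw [h0 (by simpa using hh), zero_mul]
    by_cases k4 : k = 4
    · subst k4
      refine ⟨c * b', a', b' - 1, ?_, ?_⟩
      · simp [MvPolynomial.pderiv_mul, MvPolynomial.pderiv_pow, MvPolynomial.pderiv_X]
        ring
      · intro hh
        simp at hh
        rw [h0 (by simpa using hh), zero_mul]
    · refine ⟨0, 0, 0, ?_, fun _ => rfl⟩
      simp [MvPolynomial.pderiv_mul, MvPolynomial.pderiv_pow, MvPolynomial.pderiv_X,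
        Pi.single_apply, Ne.symm k2, Ne.symm k4]

lemma pders_rep (j m b : ℕ) :
    pders (List.replicate j 2) (MvPolynomial.X 2 ^ m * MvPolynomial.X 4 ^ b) =
      MvPolynomial.C (m.descFactorial j : ℚ) *
        (MvPolynomial.X 2 ^ (m - j) * MvPolynomial.X 4 ^ b) := by
  induction j with
  | zero => simp [pders]
  | succ j ih =>
    have e : pders (List.replicate (j + 1) 2) (MvPolynomial.X 2 ^ m * MvPolynomial.X 4 ^ b) =
        MvPolynomial.pderiv 2 (pders (List.replicate j 2)
          (MvPolynomial.X 2 ^ m * MvPolynomial.X 4 ^ b)) := rfl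
    rw [e, ih, Nat.descFactorial_succ, Nat.sub_add_eq]
    simp [MvPolynomial.pderiv_mul, MvPolynomial.pderiv_pow, MvPolynomial.pderiv_X]
    ring

lemma Dz_XX (a b : ℕ) : Dz (MvPolynomial.X a * MvPolynomial.X b) =
    MvPolynomial.X a * MvPolynomial.X (b + 1) + MvPolynomial.X b * MvPolynomial.X (a + 1) := by
  rw [Derivation.leibniz, Dz_X, Dz_X, smul_eq_mul, smul_eq_mul]

lemma phi24_X (a : ℕ) : phi24 (MvPolynomial.X a) =
    if a = 2 ∨ a = 4 then MvPolynomial.X a else 0 := by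
  unfold phi24
  rw [MvPolynomial.aeval_X]

lemma phi24_X_zero (a : ℕ) (h : ¬ (a = 2 ∨ a = 4)) : phi24 (MvPolynomial.X a) = 0 := by
  rw [phi24_X, if_neg h]

lemma phi24_D2 : phi24 ((⇑Dz)^[2] (MvPolynomial.X 3 ^ 2)) =
    MvPolynomial.C 2 * MvPolynomial.X 4 ^ 2 := by
  have h2 : (MvPolynomial.C 2 : MvPolynomial ℕ ℚ) = 2 := map_ofNat MvPolynomial.C 2
  have h4 : phi24 (MvPolynomial.X 4) = MvPolynomial.X 4 := by
    rw [phi24_X, if_pos (Or.inr rfl)]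
  rw [h2, pow_two]
  simp only [Function.iterate_succ, Function.iterate_zero, Function.comp_apply, id_eq,
    Dz_XX, map_add, map_mul, Nat.reduceAdd]
  rw [phi24_X_zero 3 (by decide), h4]
  ring

lemma phi24_D4 : phi24 ((⇑Dz)^[4] (MvPolynomial.X 3 ^ 2)) = 0 := by
  rw [pow_two]
  simp only [Function.iterate_succ, Function.iterate_zero, Function.comp_apply, id_eq,
    Dz_XX, map_add, map_mul, Nat.reduceAdd]
  rw [phi24_X_zero 3 (by decide), phi24_X_zero 5 (by decide), phi24_X_zero 6 (by decide)]
  simp only [zero_mul, mul_zero, add_zero]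

/-- for `m ≥ 1` and `n ≥ 2m`, the rule-restricted simultaneous insertion of
`m` copies of `z_3²` into `z_2^m z_4^{n−2m}` for the `Φ⁴` rule `{2,4}` equals
`2^m · m! · z_4^n`:
`π_{2,4}(Σ_{k_1,…,k_m} (∏_i D^{k_i}(z_3²)) · ((∏_i ∂_{z_{k_i}})(z_2^m z_4^{n−2m})))
  = 2^m m! z_4^n`. -/
theorem stmt_7 (m n : ℕ) (hm : 1 ≤ m) (hn : 2 * m ≤ n) :
    proj24 (∑ᶠ k : Fin m → ℕ,
        (∏ i, (⇑Dz)^[k i] ((MvPolynomial.X 3 : MvPolynomial ℕ ℚ) ^ 2)) *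
          pders (List.ofFn k)
            ((MvPolynomial.X 2 : MvPolynomial ℕ ℚ) ^ m * MvPolynomial.X 4 ^ (n - 2 * m)))
      = MvPolynomial.C ((2 : ℚ) ^ m * m.factorial) * MvPolynomial.X 4 ^ n := by
  classical
  rw [proj24_eq, finsum_eq_sum_of_support_subset
    (s := Fintype.piFinset (fun _ : Fin m => ({2, 4} : Finset ℕ))), map_sum,
    Finset.sum_eq_single (fun _ => 2)]
  · rw [List.ofFn_const, pders_rep, map_mul, map_prod]
    simp only [phi24_D2]
    simp only [Finset.prod_const, Finset.card_univ, Fintype.card_fin, Nat.descFactorial_self,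
      Nat.sub_self, pow_zero, one_mul, map_mul, map_pow, mul_pow]
    have h4 : phi24 (MvPolynomial.X 4) = MvPolynomial.X 4 := by simp [phi24]
    have hC : ∀ c : ℚ, phi24 (MvPolynomial.C c) = MvPolynomial.C c := by
      intro c; simp [phi24]
    rw [h4, hC]
    obtain ⟨d, rfl⟩ := Nat.exists_eq_add_of_le hn
    rw [Nat.add_sub_cancel_left]
    ring
  · intro k hk hne
    have : ∃ i, k i ≠ 2 := by
      by_contra hcon
      push Not at hcon
      exact hne (funext hcon)
    obtain ⟨i, hi⟩ := this
    have hki := Fintype.mem_piFinset.mp hk i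
    simp only [Finset.mem_insert, Finset.mem_singleton] at hki
    have h4 : k i = 4 := by tauto
    rw [map_mul, map_prod, Finset.prod_eq_zero (Finset.mem_univ i), zero_mul]
    rw [h4, phi24_D4]
  · intro h
    exact absurd (Fintype.mem_piFinset.mpr (by simp)) h
  · intro k hk
    by_contra hcon
    apply hk
    have : ∃ i, k i ≠ 2 ∧ k i ≠ 4 := by
      by_contra h
      push Not at h
      apply hcon
      rw [Finset.mem_coe, Fintype.mem_piFinset]
      intro i
      have := h i
      simp only [Finset.mem_insert, Finset.mem_singleton]
      tauto
    obtain ⟨i, hi⟩ := this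
    obtain ⟨c, a, b, h, h0⟩ := pders_form (List.ofFn k) m (n - 2 * m)
    have := h0 ⟨k i, by simp [List.mem_ofFn], hi⟩
    simp only
    rw [h, this]
    simp
end

section
/- For all integers n ≥ 2 and 1 ≤ m ≤ ⌊n/2⌋, the coproduct coefficient of the Φ⁴ model satisfies S(z_4^n) · coeff_{z_4^n}( π_{2,4}( Σ_{k_1,…,k_m ∈ ℕ} (∏_{i=1}^m D^{k_i}(z_3²)) · ((∏_{i=1}^m ∂_{z_{k_i}})(z_2^m z_4^{n−2m})) ) ) / ( S_forest(m copies of z_3²) · S(z_2^m z_4^{n−2m}) ) = 2^{3m} · n! / (m! · (n−2m)!); equivalently, the reduced extraction–contraction coproduct of multi-indices for the Φ⁴ rule satisfies Δ_M z_4^n = Σ_{m=1}^{⌊n/2⌋} (2^{3m} n!/(m!(n−2m)!)) · (z_3²)^{⊙m} ⊗ z_2^m z_4^{n−2m}. -/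
open MvPolynomial in
/-- Set `z_4 = X` and all other variables to zero. -/
noncomputable def phi4 : MvPolynomial ℕ ℚ →ₐ[ℚ] Polynomial ℚ :=
  MvPolynomial.aeval (fun k => if k = 4 then Polynomial.X else 0)

lemma phi4_X (k : ℕ) : phi4 (MvPolynomial.X k) = if k = 4 then Polynomial.X else 0 := by
  simp [phi4]

lemma coeff_phi4 (n : ℕ) (P : MvPolynomial ℕ ℚ) :
    MvPolynomial.coeff (Finsupp.single 4 n) P = (phi4 P).coeff n := by
  induction P using MvPolynomial.induction_on' with
  | add p q hp hq => simp [hp, hq]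
  | monomial s c =>
    rw [phi4, MvPolynomial.aeval_monomial, MvPolynomial.coeff_monomial]
    by_cases h : ∃ i ∈ s.support, i ≠ 4
    · obtain ⟨i, hi, hi4⟩ := h
      have h1 : (s.prod fun i k => (if i = 4 then (Polynomial.X : Polynomial ℚ) else 0) ^ k) = 0 := by
        apply Finset.prod_eq_zero hi
        simp only [hi4, if_false]
        exact zero_pow (Finsupp.mem_support_iff.mp hi)
      rw [h1, if_neg]
      · simp
      · rintro rfl
        simp [Finsupp.single_apply] at hi
        exact hi4 hi.1.symm
    · push Not at h
      have hs : s = Finsupp.single 4 (s 4) := by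
        ext i
        by_cases hi : i = 4
        · subst hi; simp
        · rw [Finsupp.single_eq_of_ne hi]
          by_contra h0
          exact hi (h i (Finsupp.mem_support_iff.mpr h0))
      rw [hs]
      simp [Polynomial.coeff_X_pow, (Finsupp.single_injective (4:ℕ)).eq_iff, eq_comm]

lemma coeff_proj24 (γ : ℕ →₀ ℕ) (hγ : γ.support ⊆ ({2, 4} : Finset ℕ)) (P : MvPolynomial ℕ ℚ) :
    MvPolynomial.coeff γ (proj24 P) = MvPolynomial.coeff γ P := by
  rw [proj24, MvPolynomial.coeff_sum]
  rw [Finset.sum_eq_single γ]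
  · rw [if_pos hγ, MvPolynomial.coeff_monomial, if_pos rfl]
  · intro b _ hb
    split_ifs
    · rw [MvPolynomial.coeff_monomial, if_neg hb]
    · simp
  · intro h
    rw [if_pos hγ, MvPolynomial.coeff_monomial, if_pos rfl]
    simpa using h

lemma pderiv_comm' (i j : ℕ) (P : MvPolynomial ℕ ℚ) :
    MvPolynomial.pderiv i (MvPolynomial.pderiv j P)
      = MvPolynomial.pderiv j (MvPolynomial.pderiv i P) := by
  have h : ⁅(MvPolynomial.pderiv i : Derivation ℚ (MvPolynomial ℕ ℚ) (MvPolynomial ℕ ℚ)),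
      (MvPolynomial.pderiv j : Derivation ℚ (MvPolynomial ℕ ℚ) (MvPolynomial ℕ ℚ))⁆ = 0 := by
    refine MvPolynomial.derivation_ext (fun k => ?_)
    simp only [Derivation.commutator_apply, MvPolynomial.pderiv_X, Pi.single_apply]
    split_ifs <;> simp
  have := congrArg (fun d => d P) h
  simpa [Derivation.commutator_apply, sub_eq_zero] using this

lemma pderiv_pders (j : ℕ) (ks : List ℕ) (P : MvPolynomial ℕ ℚ)
    (h : MvPolynomial.pderiv j P = 0) : MvPolynomial.pderiv j (pders ks P) = 0 := by
  induction ks with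
  | nil => simpa [pders] using h
  | cons k ks ih =>
    change MvPolynomial.pderiv j (MvPolynomial.pderiv k (pders ks P)) = 0
    rw [pderiv_comm', ih, map_zero]

lemma pders_eq_zero (j : ℕ) (ks : List ℕ) (P : MvPolynomial ℕ ℚ)
    (h : MvPolynomial.pderiv j P = 0) (hj : j ∈ ks) : pders ks P = 0 := by
  induction ks with
  | nil => simp at hj
  | cons k ks ih =>
    change MvPolynomial.pderiv k (pders ks P) = 0
    rcases List.mem_cons.mp hj with rfl | hj
    · exact pderiv_pders _ _ _ h
    · rw [ih hj, map_zero]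

lemma pders_replicate (m : ℕ) (Q : MvPolynomial ℕ ℚ) (hQ : MvPolynomial.pderiv 2 Q = 0) (j : ℕ) :
    pders (List.replicate j 2) (MvPolynomial.X 2 ^ m * Q)
      = (m.descFactorial j : MvPolynomial ℕ ℚ) * (MvPolynomial.X 2 ^ (m - j) * Q) := by
  induction j with
  | zero => simp [pders]
  | succ j ih =>
    rw [List.replicate_succ]
    change MvPolynomial.pderiv 2 (pders (List.replicate j 2) _) = _
    rw [ih, Nat.descFactorial_succ]
    simp [Derivation.leibniz, hQ, Derivation.leibniz_pow, Nat.sub_sub]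
    ring

lemma phi4_XX (a b : ℕ) : phi4 (MvPolynomial.X a * MvPolynomial.X b)
    = if a = 4 ∧ b = 4 then Polynomial.X ^ 2 else 0 := by
  rw [map_mul, phi4_X, phi4_X]
  by_cases ha : a = 4 <;> by_cases hb : b = 4 <;> simp [ha, hb, pow_two]

lemma phi4_D2 : phi4 ((⇑Dz)^[2] ((MvPolynomial.X 3 : MvPolynomial ℕ ℚ) ^ 2))
    = 2 * Polynomial.X ^ 2 := by
  rw [pow_two]
  simp only [Function.iterate_succ_apply, Function.iterate_zero_apply, Dz_XX, map_add, phi4_XX]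
  norm_num
  ring

lemma phi4_D4 : phi4 ((⇑Dz)^[4] ((MvPolynomial.X 3 : MvPolynomial ℕ ℚ) ^ 2)) = 0 := by
  rw [pow_two]
  simp only [Function.iterate_succ_apply, Function.iterate_zero_apply, Dz_XX, map_add, phi4_XX]
  norm_num

lemma S_eq (β : ℕ →₀ ℕ) (s : Finset ℕ) (h : β.support ⊆ s) :
    S β = ∏ k ∈ s, Nat.factorial (β k) * Nat.factorial k ^ β k := by
  apply Finset.prod_subset h
  intro x _ hx
  simp [Finsupp.notMem_support_iff.mp hx]

lemma S_single (a b : ℕ) : S (Finsupp.single a b) = b.factorial * a.factorial ^ b := by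
  rw [S_eq _ {a} Finsupp.support_single_subset]; simp

lemma S_two (a b : ℕ) : S (Finsupp.single 2 a + Finsupp.single 4 b)
    = (a.factorial * 2 ^ a) * (b.factorial * 24 ^ b) := by
  rw [S_eq _ {2, 4}]
  · simp [Finsupp.single_apply, Nat.factorial]
  · intro x hx
    simp [Finsupp.single_apply] at hx ⊢
    omega

lemma main_coeff (n m : ℕ) (hm2 : 2 * m ≤ n) :
    MvPolynomial.coeff (Finsupp.single 4 n)
          (proj24 (∑ᶠ k : Fin m → ℕ,
            (∏ i, (⇑Dz)^[k i] ((MvPolynomial.X 3 : MvPolynomial ℕ ℚ) ^ 2)) *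
              pders (List.ofFn k)
                ((MvPolynomial.X 2 : MvPolynomial ℕ ℚ) ^ m *
                  MvPolynomial.X 4 ^ (n - 2 * m)))) = 2 ^ m * m.factorial := by
  rw [coeff_proj24, coeff_phi4]
  swap
  · exact Finsupp.support_single_subset.trans (by simp)
  rw [finsum_eq_sum_of_support_subset (s := Fintype.piFinset fun _ => ({2, 4} : Finset ℕ))]
  · rw [map_sum, Finset.sum_eq_single (fun _ => 2)]
    · rw [map_mul, map_prod, List.ofFn_const, pders_replicate _ _ (by simp [MvPolynomial.pderiv_X_of_ne, Derivation.leibniz_pow])]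
      simp only [phi4_D2]
      simp [phi4_X, Nat.descFactorial_self]
      have : (2 * Polynomial.X ^ 2 : Polynomial ℚ) ^ m * ((m.factorial : Polynomial ℚ) * Polynomial.X ^ (n - 2 * m))
          = Polynomial.C ((2:ℚ) ^ m * m.factorial) * Polynomial.X ^ n := by
        rw [mul_pow, ← pow_mul]
        have hx : (Polynomial.X : Polynomial ℚ) ^ n
            = Polynomial.X ^ (2 * m) * Polynomial.X ^ (n - 2 * m) := by
          rw [← pow_add, Nat.add_sub_cancel' hm2]
        have hc : (Polynomial.C (2 : ℚ)) = 2 := rfl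
        rw [hx]
        simp [hc]
        ring
      rw [this, Polynomial.coeff_C_mul, Polynomial.coeff_X_pow_self, mul_one]
    · intro k hk hne
      have : ∃ i, k i ≠ 2 := by
        by_contra h
        push Not at h
        exact hne (funext h)
      obtain ⟨i, hi⟩ := this
      have hk4 : k i = 4 := by
        have := Fintype.mem_piFinset.mp hk i
        simp at this
        tauto
      rw [map_mul, map_prod, Finset.prod_eq_zero (Finset.mem_univ i), zero_mul]
      rw [hk4, phi4_D4]
    · intro h
      simp at h
  · intro k hk
    simp only [Finset.mem_coe, Fintype.mem_piFinset]
    intro i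
    by_contra hi
    apply hk
    simp at hi
    change _ * _ = _
    rw [pders_eq_zero (k i), mul_zero]
    · simp [Derivation.leibniz, Derivation.leibniz_pow, MvPolynomial.pderiv_X_of_ne (Ne.symm hi.1),
        MvPolynomial.pderiv_X_of_ne (Ne.symm hi.2)]
    · exact (List.mem_ofFn' _ _).mpr ⟨i, rfl⟩

/-- for `n ≥ 2` and `1 ≤ m ≤ ⌊n/2⌋`, the coproduct coefficient of the `Φ⁴`
model satisfies
`S(z_4^n) · coeff_{z_4^n}(π_{2,4}((z_3²)^{⊙m} ⋆ z_2^m z_4^{n−2m}))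
  / (S_forest(m copies of z_3²) · S(z_2^m z_4^{n−2m})) = 2^{3m} n! / (m! (n−2m)!)`,
i.e. `Δ_M z_4^n = Σ_{m=1}^{⌊n/2⌋} (2^{3m} n!/(m!(n−2m)!)) (z_3²)^{⊙m} ⊗ z_2^m z_4^{n−2m}`,
where the simultaneous insertion is
`Σ_{k_1,…,k_m} (∏_i D^{k_i}(z_3²)) · ((∏_i ∂_{z_{k_i}})(z_2^m z_4^{n−2m}))` and the
forest symmetry factor of `m` copies of `z_3²` is `m! · S(z_3²)^m`. -/
theorem stmt_8 (n m : ℕ) (hn : 2 ≤ n) (hm : 1 ≤ m) (hm2 : m ≤ n / 2) :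
    (S (Finsupp.single 4 n) : ℚ) *
        MvPolynomial.coeff (Finsupp.single 4 n)
          (proj24 (∑ᶠ k : Fin m → ℕ,
            (∏ i, (⇑Dz)^[k i] ((MvPolynomial.X 3 : MvPolynomial ℕ ℚ) ^ 2)) *
              pders (List.ofFn k)
                ((MvPolynomial.X 2 : MvPolynomial ℕ ℚ) ^ m *
                  MvPolynomial.X 4 ^ (n - 2 * m)))) /
      ((m.factorial * S (Finsupp.single 3 2) ^ m : ℚ) *
        (S (Finsupp.single 2 m + Finsupp.single 4 (n - 2 * m)) : ℚ))
      = (2 : ℚ) ^ (3 * m) * n.factorial / (m.factorial * (n - 2 * m).factorial) := by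
  have h2 : 2 * m ≤ n := by omega
  rw [main_coeff n m h2, S_single, S_single, S_two]
  obtain ⟨r, rfl⟩ := Nat.exists_eq_add_of_le h2
  have e : 2 * m + r - 2 * m = r := by omega
  rw [e]
  have h1 : (m.factorial : ℚ) ≠ 0 := by exact_mod_cast m.factorial_ne_zero
  have h3 : (r.factorial : ℚ) ≠ 0 := by exact_mod_cast r.factorial_ne_zero
  have f4 : Nat.factorial 4 = 24 := rfl
  have f3 : Nat.factorial 3 = 6 := rfl
  have f2 : Nat.factorial 2 = 2 := rfl
  rw [f4, f3, f2]
  push_cast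
  rw [div_eq_div_iff (by positivity) (by positivity)]
  have k : (24 : ℚ) ^ (2 * m + r) * 2 ^ m = 2 ^ (3 * m) * (2 * 6 ^ 2) ^ m * 2 ^ m * 24 ^ r := by
    rw [pow_add, pow_mul, pow_mul, ← mul_pow]
    norm_num
    rw [mul_right_comm, ← mul_pow]
  linear_combination ((2 * m + r).factorial * m.factorial * m.factorial * r.factorial : ℚ) * k
end
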